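/- arXiv:2109.13552 — 3 statements merged into one kernel-verified Lean document; each statement's English description precedes it below -/
import Mathlib

section
/- For every integer d ≥ 2, the set of tuples (s₁,…,s_{2d}) ∈ ℂ^{2d} such that the polynomial D(t) = t^{2d} + s₁t^{2d−1} + ⋯ + s_{2d} ∈ ℂ[t] is squarefree and Pellian is dense, with respect to the Euclidean topology on ℂ^{2d}, in the set of tuples (s₁,…,s_{2d}) for which D is squarefree. -/
open Polynomial

/-- The monic polynomial `t^(2d) + s₁ t^(2d-1) + ⋯ + s_(2d)` determined by the tuple `s`. -/
noncomputable def Dpoly (d : ℕ) (s : Fin (2*d) → ℂ) : Polynomial ℂ :=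
  X ^ (2*d) + ∑ i : Fin (2*d), C (s i) * X ^ (2*d - 1 - (i : ℕ))

/-- A polynomial `D ∈ ℂ[t]` is Pellian if the Pell–Abel equation `A² - D B² = 1`
has a solution with `B ≠ 0`. -/
def Pellian (D : Polynomial ℂ) : Prop :=
  ∃ A B : Polynomial ℂ, B ≠ 0 ∧ A ^ 2 - D * B ^ 2 = 1

open Set Filter Topology MeasureTheory

section ParamIntegral

variable {E G : Type*} [NormedAddCommGroup E] [NormedSpace ℂ E]
  [NormedAddCommGroup G] [NormedSpace ℂ G] [CompleteSpace G]

/-- tube lemma along the unit segment -/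
lemma tube01 {E : Type*} [TopologicalSpace E] {x₀ : E} {Pr : E × ℂ → Prop}
    (h : ∀ u ∈ Icc (0:ℝ) 1, ∀ᶠ p in 𝓝 (x₀, (u:ℂ)), Pr p) :
    ∀ᶠ x in 𝓝 x₀, ∀ u ∈ Icc (0:ℝ) 1, Pr (x, (u:ℂ)) := by
  apply isCompact_Icc.eventually_forall_of_forall_eventually
    (P := fun x (u:ℝ) => Pr (x, (u:ℂ)))
  intro u hu
  have hc : Tendsto (fun z : E × ℝ => (z.1, (z.2:ℂ))) (𝓝 (x₀, u)) (𝓝 (x₀, (u:ℂ))) := by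
    have : Continuous (fun z : E × ℝ => (z.1, (z.2:ℂ))) := by fun_prop
    exact this.tendsto (x₀, u)
  exact hc.eventually (h u hu)

lemma tube01_bound {E : Type*} [TopologicalSpace E] {G : Type*} [NormedAddCommGroup G]
    {x₀ : E} {k : E × ℂ → G}
    (h : ∀ u ∈ Icc (0:ℝ) 1, ContinuousAt k (x₀, (u:ℂ))) :
    ∃ M, ∀ᶠ x in 𝓝 x₀, ∀ u ∈ Icc (0:ℝ) 1, ‖k (x, (u:ℂ))‖ ≤ M := by
  have hc : ContinuousOn (fun u : ℝ => k (x₀, (u:ℂ))) (Icc 0 1) := by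
    intro u hu
    have := h u hu
    have h2 : ContinuousAt (fun u : ℝ => (x₀, (u:ℂ))) u := by fun_prop
    exact (ContinuousAt.comp (f := fun u : ℝ => (x₀, (u:ℂ))) this h2).continuousWithinAt
  obtain ⟨M, hM⟩ := isCompact_Icc.exists_bound_of_continuousOn hc
  refine ⟨M + 1, tube01 (Pr := fun p => ‖k p‖ ≤ M + 1) ?_⟩
  intro u hu
  have h1 : ∀ᶠ p in 𝓝 (x₀, (u:ℂ)), ‖k p‖ < M + 1 :=
    (h u hu).norm.eventually_lt_const (by have := hM u hu; linarith)
  exact h1.mono fun p hp => hp.le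

lemma contOn_of_an {k : E × ℂ → G} {x : E}
    (h : ∀ u ∈ Icc (0:ℝ) 1, AnalyticAt ℂ k (x, (u:ℂ))) :
    ContinuousOn (fun u : ℝ => k (x, (u:ℂ))) (Icc 0 1) := by
  intro u hu
  have h2 : ContinuousAt (fun u : ℝ => (x, (u:ℂ))) u := by fun_prop
  exact (ContinuousAt.comp (f := fun u : ℝ => (x, (u:ℂ))) (h u hu).continuousAt
    h2).continuousWithinAt

lemma meas_of_an {k : E × ℂ → G} {x : E}
    (h : ∀ u ∈ Icc (0:ℝ) 1, AnalyticAt ℂ k (x, (u:ℂ))) :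
    AEStronglyMeasurable (fun u : ℝ => k (x, (u:ℂ))) (volume.restrict (uIoc (0:ℝ) 1)) := by
  rw [uIoc_of_le zero_le_one]
  exact ((contOn_of_an h).mono Ioc_subset_Icc_self).aestronglyMeasurable measurableSet_Ioc

lemma ii_of_an {k : E × ℂ → G} {x : E}
    (h : ∀ u ∈ Icc (0:ℝ) 1, AnalyticAt ℂ k (x, (u:ℂ))) :
    IntervalIntegrable (fun u : ℝ => k (x, (u:ℂ))) volume 0 1 := by
  apply ContinuousOn.intervalIntegrable
  rw [uIcc_of_le zero_le_one]
  exact contOn_of_an h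

/-- the partial derivative of the integrand -/
noncomputable def pderiv1 (k : E × ℂ → G) (p : E × ℂ) : E →L[ℂ] G :=
  (fderiv ℂ k p).comp (ContinuousLinearMap.inl ℂ E ℂ)

lemma pderiv1_an {k : E × ℂ → G} {p : E × ℂ} (h : AnalyticAt ℂ k p) :
    AnalyticAt ℂ (pderiv1 k) p := by
  have h1 := h.fderiv
  exact (((ContinuousLinearMap.compL ℂ E (E × ℂ) G).flip
    (ContinuousLinearMap.inl ℂ E ℂ)).analyticAt _).comp h1

lemma pderiv1_has {k : E × ℂ → G} {x : E} {u : ℂ} (h : AnalyticAt ℂ k (x, u)) :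
    HasFDerivAt (fun x => k (x, u)) (pderiv1 k (x, u)) x := by
  have h1 := h.differentiableAt.hasFDerivAt
  exact HasFDerivAt.comp (f := fun x : E => (x, u)) x h1 (hasFDerivAt_prodMk_left x u)

lemma paramInt_fderiv {k : E × ℂ → G} {x₀ : E}
    (h : ∀ u ∈ Icc (0:ℝ) 1, AnalyticAt ℂ k (x₀, (u:ℂ))) :
    HasFDerivAt (fun x => ∫ u in (0:ℝ)..1, k (x, (u:ℂ)))
      (∫ u in (0:ℝ)..1, pderiv1 k (x₀, (u:ℂ))) x₀ := by
  have h' : ∀ u ∈ Icc (0:ℝ) 1, AnalyticAt ℂ (pderiv1 k) (x₀, (u:ℂ)) :=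
    fun u hu => pderiv1_an (h u hu)
  have hA := tube01 (Pr := fun p => AnalyticAt ℂ k p) (fun u hu => (h u hu).eventually_analyticAt)
  obtain ⟨M, hM⟩ := tube01_bound (fun u hu => (h' u hu).continuousAt)
  have hs := hA.and hM
  refine intervalIntegral.hasFDerivAt_integral_of_dominated_of_fderiv_le (𝕜 := ℂ)
    (s := {x | (∀ u ∈ Icc (0:ℝ) 1, AnalyticAt ℂ k (x, (u:ℂ))) ∧
      ∀ u ∈ Icc (0:ℝ) 1, ‖pderiv1 k (x, (u:ℂ))‖ ≤ M})
    (bound := fun _ => M) (F' := fun x u => pderiv1 k (x, (u:ℂ)))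
    hs (hA.mono fun x hx => meas_of_an hx) (ii_of_an h) (meas_of_an h') ?_
    intervalIntegrable_const ?_
  · refine ae_of_all _ fun u hu x hx => hx.2 u ?_
    rw [uIoc_of_le zero_le_one] at hu
    exact Ioc_subset_Icc_self hu
  · refine ae_of_all _ fun u hu x hx => pderiv1_has (hx.1 u ?_)
    rw [uIoc_of_le zero_le_one] at hu
    exact Ioc_subset_Icc_self hu

lemma paramInt_strict {k : E × ℂ → G} {x₀ : E}
    (h : ∀ u ∈ Icc (0:ℝ) 1, AnalyticAt ℂ k (x₀, (u:ℂ))) :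
    HasStrictFDerivAt (fun x => ∫ u in (0:ℝ)..1, k (x, (u:ℂ)))
      (∫ u in (0:ℝ)..1, pderiv1 k (x₀, (u:ℂ))) x₀ := by
  have hA := tube01 (Pr := fun p => AnalyticAt ℂ k p) (fun u hu => (h u hu).eventually_analyticAt)
  have h' : ∀ u ∈ Icc (0:ℝ) 1, AnalyticAt ℂ (pderiv1 k) (x₀, (u:ℂ)) :=
    fun u hu => pderiv1_an (h u hu)
  refine hasStrictFDerivAt_of_hasFDerivAt_of_continuousAt
    (f' := fun x => ∫ u in (0:ℝ)..1, pderiv1 k (x, (u:ℂ)))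
    (hA.mono fun x hx => paramInt_fderiv hx) ?_
  exact (paramInt_fderiv h').continuousAt

lemma paramInt_apply {k : E × ℂ → G} {x₀ : E}
    (h : ∀ u ∈ Icc (0:ℝ) 1, AnalyticAt ℂ k (x₀, (u:ℂ))) (v : E) :
    (∫ u in (0:ℝ)..1, pderiv1 k (x₀, (u:ℂ))) v = ∫ u in (0:ℝ)..1, pderiv1 k (x₀, (u:ℂ)) v :=
  ContinuousLinearMap.intervalIntegral_apply
    (ii_of_an (fun u hu => pderiv1_an (h u hu))) v

end ParamIntegral

/-- primitive on a segment from `0` -/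
lemma prim_zero {h : ℂ → ℂ} {t : ℂ} (hh : ∀ u ∈ Icc (0:ℝ) 1, AnalyticAt ℂ h (u * t)) :
    HasDerivAt (fun t => ∫ u in (0:ℝ)..1, t * h (u * t)) (h t) t := by
  set k : ℂ × ℂ → ℂ := fun p => p.1 * h (p.2 * p.1) with hk
  have hka : ∀ u ∈ Icc (0:ℝ) 1, AnalyticAt ℂ k (t, (u:ℂ)) := by
    intro u hu
    have h1 : AnalyticAt ℂ (fun p : ℂ × ℂ => p.2 * p.1) (t, (u:ℂ)) :=
      analyticAt_snd.mul analyticAt_fst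
    exact analyticAt_fst.mul (AnalyticAt.comp (g := h) (hh u hu) h1)
  have h1 := (paramInt_fderiv hka).hasDerivAt
  rw [paramInt_apply hka] at h1
  have h2 : (∫ u in (0:ℝ)..1, pderiv1 k (t, (u:ℂ)) 1) = h t := by
    have hd : ∀ u ∈ uIcc (0:ℝ) 1, HasDerivAt (fun u : ℝ => (u:ℂ) * h (u * t))
        (pderiv1 k (t, (u:ℂ)) 1) u := by
      intro u hu
      rw [uIcc_of_le zero_le_one] at hu
      have e1 : HasDerivAt h (deriv h (u * t)) (u * t) := (hh u hu).differentiableAt.hasDerivAt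
      have e2 : HasDerivAt (fun x => k (x, (u:ℂ))) (pderiv1 k (t, (u:ℂ)) 1) t :=
        (pderiv1_has (hka u hu)).hasDerivAt
      have e3 : HasDerivAt (fun x => k (x, (u:ℂ))) (1 * h (u * t) + t * (deriv h (u * t) * (u * 1))) t := by
        have := ((hasDerivAt_id t).const_mul (u:ℂ))
        have e4 : HasDerivAt (fun x => h (u * x)) (deriv h (u * t) * (u * 1)) t := by
          exact HasDerivAt.comp t e1 this
        exact (hasDerivAt_id t).mul e4
      rw [e2.unique e3]
      have e5 : HasDerivAt (fun u : ℝ => (u:ℂ)) 1 u := Complex.ofRealCLM.hasDerivAt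
      have e6 : HasDerivAt (fun u : ℝ => h (u * t)) (deriv h (u * t) * (1 * t)) u := by
        exact HasDerivAt.comp (h := fun u : ℝ => (u:ℂ) * t) u e1 (e5.mul_const t)
      refine HasDerivAt.congr_deriv (e5.mul e6) ?_
      ring
    rw [intervalIntegral.integral_eq_sub_of_hasDerivAt hd]
    · simp
    · exact ii_of_an (k := fun p => pderiv1 k p 1) (fun u hu =>
        ((ContinuousLinearMap.apply ℂ ℂ (1:ℂ)).analyticAt _).comp (pderiv1_an (hka u hu)))
  rwa [h2] at h1

/-- the square-root substituted primitive -/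
lemma prim_sq {h : ℂ → ℂ} {a t : ℂ}
    (hh : ∀ u ∈ Icc (0:ℝ) 1, AnalyticAt ℂ h (a + u ^ 2 * (t - a))) :
    ∃ D : ℂ, HasDerivAt (fun t => ∫ u in (0:ℝ)..1, h (a + u ^ 2 * (t - a))) D t ∧
      2 * (t - a) * D = h t - ∫ u in (0:ℝ)..1, h (a + u ^ 2 * (t - a)) := by
  set k : ℂ × ℂ → ℂ := fun p => h (a + p.2 ^ 2 * (p.1 - a)) with hk
  have hka : ∀ u ∈ Icc (0:ℝ) 1, AnalyticAt ℂ k (t, (u:ℂ)) := by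
    intro u hu
    have h1 : AnalyticAt ℂ (fun p : ℂ × ℂ => a + p.2 ^ 2 * (p.1 - a)) (t, (u:ℂ)) :=
      analyticAt_const.add ((analyticAt_snd.pow 2).mul (analyticAt_fst.sub analyticAt_const))
    exact AnalyticAt.comp (g := h) (hh u hu) h1
  have h1 := (paramInt_fderiv hka).hasDerivAt
  rw [paramInt_apply hka] at h1
  refine ⟨_, h1, ?_⟩
  have hpi := ii_of_an (k := fun p => pderiv1 k p 1) (fun u hu =>
        ((ContinuousLinearMap.apply ℂ ℂ (1:ℂ)).analyticAt _).comp (pderiv1_an (hka u hu)))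
  have h2 : (∫ u in (0:ℝ)..1, (2 * (t - a) * pderiv1 k (t, (u:ℂ)) 1 + k (t, (u:ℂ)))) = h t := by
    have hd : ∀ u ∈ uIcc (0:ℝ) 1, HasDerivAt (fun u : ℝ => (u:ℂ) * h (a + u ^ 2 * (t - a)))
        (2 * (t - a) * pderiv1 k (t, (u:ℂ)) 1 + k (t, (u:ℂ))) u := by
      intro u hu
      rw [uIcc_of_le zero_le_one] at hu
      have e1 : HasDerivAt h (deriv h (a + u ^ 2 * (t - a))) (a + u ^ 2 * (t - a)) :=
        (hh u hu).differentiableAt.hasDerivAt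
      have e2 : HasDerivAt (fun x => k (x, (u:ℂ))) (pderiv1 k (t, (u:ℂ)) 1) t :=
        (pderiv1_has (hka u hu)).hasDerivAt
      have e3 : HasDerivAt (fun x => k (x, (u:ℂ)))
          (deriv h (a + u ^ 2 * (t - a)) * ((u:ℂ) ^ 2 * 1)) t := by
        have := (((hasDerivAt_id t).sub_const a).const_mul ((u:ℂ) ^ 2)).const_add a
        exact HasDerivAt.comp t e1 this
      rw [e2.unique e3]
      have e5 : HasDerivAt (fun u : ℝ => (u:ℂ)) 1 u := Complex.ofRealCLM.hasDerivAt
      have e6 : HasDerivAt (fun u : ℝ => h (a + u ^ 2 * (t - a)))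
          (deriv h (a + u ^ 2 * (t - a)) * ((((2:ℕ):ℂ) * (u:ℂ) ^ (2 - 1) * 1) * (t - a))) u := by
        exact HasDerivAt.comp (h := fun u : ℝ => a + (u:ℂ) ^ 2 * (t - a)) u e1
          (((e5.pow 2).mul_const (t - a)).const_add a)
      refine HasDerivAt.congr_deriv (e5.mul e6) ?_
      simp only [hk]
      push_cast
      ring
    rw [intervalIntegral.integral_eq_sub_of_hasDerivAt hd]
    · simp
    · exact (hpi.const_mul _).add (ii_of_an hka)
  rw [intervalIntegral.integral_add (hpi.const_mul _) (ii_of_an hka),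
    intervalIntegral.integral_const_mul] at h2
  rw [← h2]
  simp [hk]

/-- an entire function of polynomial growth is a polynomial -/
lemma poly_of_growth {f : ℂ → ℂ} (hf : Differentiable ℂ f) (n : ℕ) {ρ C R : ℝ}
    (hρ : ρ < n + 1) (hR : 0 < R) (hb : ∀ t : ℂ, R ≤ ‖t‖ → ‖f t‖ ≤ C * ‖t‖ ^ ρ) :
    ∃ p : Polynomial ℂ, p.natDegree ≤ n ∧ ∀ t, f t = p.eval t := by
  have hz : ∀ m : ℕ, n < m → iteratedDeriv m f 0 = 0 := by
    intro m hm
    have hm' : ρ < m := lt_of_lt_of_le hρ (by exact_mod_cast hm)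
    have hlim : Tendsto (fun r : ℝ => (m.factorial:ℝ) * C * r ^ (-((m:ℝ) - ρ))) atTop (𝓝 ((m.factorial:ℝ) * C * 0)) :=
      (tendsto_rpow_neg_atTop (by linarith)).const_mul _
    rw [mul_zero] at hlim
    have hle : ∀ᶠ r : ℝ in atTop, ‖iteratedDeriv m f 0‖ ≤ (m.factorial:ℝ) * C * r ^ (-((m:ℝ) - ρ)) := by
      filter_upwards [eventually_ge_atTop R] with r hr
      have hr0 : 0 < r := hR.trans_le hr
      have := Complex.norm_iteratedDeriv_le_of_forall_mem_sphere_norm_le (c := 0) (R := r)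
        (C := C * r ^ ρ) (f := f) m hr0 hf.diffContOnCl (by
          intro z hz
          have hz' : ‖z‖ = r := by simpa using hz
          have := hb z (by rw [hz']; exact hr)
          rwa [hz'] at this)
      refine this.trans (le_of_eq ?_)
      rw [neg_sub, Real.rpow_sub hr0, Real.rpow_natCast]
      ring
    have := ge_of_tendsto hlim hle
    exact norm_le_zero_iff.mp this
  refine ⟨∑ m ∈ Finset.range (n + 1), Polynomial.C ((m.factorial:ℂ)⁻¹ * iteratedDeriv m f 0) * Polynomial.X ^ m, ?_, ?_⟩
  · refine Polynomial.natDegree_sum_le_of_forall_le _ _ ?_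
    intro m hm
    refine (Polynomial.natDegree_C_mul_X_pow_le _ _).trans ?_
    have := Finset.mem_range.mp hm
    omega
  · intro t
    rw [← Complex.taylorSeries_eq_of_entire' 0 t hf, tsum_eq_sum (s := Finset.range (n + 1))]
    · simp [Polynomial.eval_finsetSum]
    · intro m hm
      rw [hz m (by simpa using hm)]
      simp

lemma even_factor {f : ℂ → ℂ} (hf : Differentiable ℂ f) (he : ∀ z, f (-z) = f z) :
    ∃ g : ℂ → ℂ, Differentiable ℂ g ∧ ∀ z, g (z ^ 2) = f z := by
  let g : ℂ → ℂ := fun w => f (w ^ (1/2:ℂ))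
  have hg : ∀ z, g (z ^ 2) = f z := by
    intro z
    have : ((z ^ 2) ^ (1/2:ℂ)) ^ 2 = z ^ 2 := by
      rw [← Complex.cpow_nat_mul]; simp
    rcases sq_eq_sq_iff_eq_or_eq_neg.mp this with h | h
    · simp only [g, h]
    · simp only [g, h, he]
  have h1 : ∀ w ≠ 0, DifferentiableAt ℂ g w := by
    intro w hw
    by_cases h : w ∈ Complex.slitPlane
    · exact hf.differentiableAt.comp w (differentiableAt_id.cpow_const h)
    · have h' : -w ∈ Complex.slitPlane := by
        rw [Complex.mem_slitPlane_iff] at h ⊢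
        push Not at h
        left
        have : w.re ≠ 0 := fun h0 => hw (Complex.ext h0 h.2)
        simp only [Complex.neg_re]
        rcases lt_or_gt_of_ne this with h3 | h3 <;> linarith [h.1]
      have e : g = fun w => f (Complex.I * (-w) ^ (1/2:ℂ)) := by
        funext w
        rw [← hg, mul_pow, ← Complex.cpow_nat_mul]; simp
      rw [e]
      have : DifferentiableAt ℂ (fun w : ℂ => Complex.I * (-w) ^ (1/2:ℂ)) w :=
        (differentiableAt_id.neg.cpow_const h').const_mul _
      exact hf.differentiableAt.comp w this
  refine ⟨g, ?_, hg⟩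
  intro w
  by_cases hw : w = 0
  · subst hw
    refine (Complex.analyticAt_of_differentiable_on_punctured_nhds_of_continuousAt ?_ ?_).differentiableAt
    · exact eventually_nhdsWithin_of_forall fun z hz => h1 z hz
    · have hc : ContinuousAt (fun w : ℂ => w ^ (1/2:ℂ)) 0 :=
        Complex.continuousAt_cpow_const_of_re_pos (Or.inl le_rfl) (by norm_num)
      exact ContinuousAt.comp (f := fun w : ℂ => w ^ (1/2:ℂ)) hf.continuous.continuousAt hc
  · exact h1 w hw

lemma cosh_sinh_factor : ∃ C S : ℂ → ℂ, Differentiable ℂ C ∧ Differentiable ℂ S ∧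
    (∀ z, C (z ^ 2) = Complex.cosh z) ∧ (∀ z, z * S (z ^ 2) = Complex.sinh z) := by
  obtain ⟨C, hC, hC'⟩ := even_factor (f := Complex.cosh) Complex.differentiable_cosh (by simp)
  have hs : Differentiable ℂ (dslope Complex.sinh 0) := by
    have := (Complex.differentiableOn_dslope (f := Complex.sinh) (s := univ) (c := 0) univ_mem).2
      Complex.differentiable_sinh.differentiableOn
    exact differentiableOn_univ.mp this
  have he : ∀ z, dslope Complex.sinh 0 (-z) = dslope Complex.sinh 0 z := by
    intro z
    by_cases hz : z = 0
    · simp [hz]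
    · rw [dslope_of_ne _ hz, dslope_of_ne _ (neg_ne_zero.mpr hz)]
      simp [slope_def_field, neg_div_neg_eq]
  obtain ⟨S, hS, hS'⟩ := even_factor hs he
  refine ⟨C, S, hC, hS, hC', fun z => ?_⟩
  rw [hS']
  have := sub_smul_dslope Complex.sinh 0 z
  simpa using this
set_option linter.unusedSectionVars false

/-- principal square root -/
noncomputable def rt (w : ℂ) : ℂ := w ^ (1/2:ℂ)

lemma rt_sq (w : ℂ) : rt w ^ 2 = w := by
  rw [rt, ← Complex.cpow_nat_mul]; simp

lemma rt_one : rt 1 = 1 := by simp [rt]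

lemma rt_ne {w : ℂ} (h : w ∈ Complex.slitPlane) : rt w ≠ 0 := by
  intro h0
  have := rt_sq w
  rw [h0] at this
  exact Complex.slitPlane_ne_zero h (by simpa using this.symm)

lemma rt_an {w : ℂ} (h : w ∈ Complex.slitPlane) : AnalyticAt ℂ rt w :=
  analyticAt_id.cpow analyticAt_const h

lemma rt_deriv {w : ℂ} (h : w ∈ Complex.slitPlane) : HasDerivAt rt (1 / (2 * rt w)) w := by
  have h1 := (rt_an h).differentiableAt.hasDerivAt
  have h2 := h1.pow 2
  have h3 : HasDerivAt (rt ^ 2) 1 w := by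
    have : rt ^ 2 = id := by funext z; exact rt_sq z
    rw [this]; exact hasDerivAt_id w
  have h4 := h2.unique h3
  have hn := rt_ne h
  refine h1.congr_deriv ?_
  rw [eq_div_iff (mul_ne_zero two_ne_zero hn)]
  simp only [Nat.cast_ofNat, Nat.add_one_sub_one, pow_one] at h4
  linear_combination h4

section Setup

variable {ι : Type} [Fintype ι] [DecidableEq ι] {d : ℕ}

/-- the abelian integrand, with only the branch points in `J` -/
noncomputable def gfun (J : Finset ι) (p : ((ι → ℂ) × (Fin d → ℂ)) × ℂ) : ℂ :=
  (∑ k : Fin d, p.1.2 k * p.2 ^ (k:ℕ)) * ∏ j ∈ J, (rt (1 - p.1.1 j * p.2))⁻¹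

lemma gfun_an {J : Finset ι} {p : ((ι → ℂ) × (Fin d → ℂ)) × ℂ}
    (h : ∀ j ∈ J, 1 - p.1.1 j * p.2 ∈ Complex.slitPlane) : AnalyticAt ℂ (gfun J) p := by
  have he : ∀ j, AnalyticAt ℂ (fun p : ((ι → ℂ) × (Fin d → ℂ)) × ℂ => p.1.1 j) p := fun j =>
    ((ContinuousLinearMap.proj (R := ℂ) (φ := fun _ : ι => ℂ) j).comp
      ((ContinuousLinearMap.fst ℂ _ _).comp (ContinuousLinearMap.fst ℂ _ _))).analyticAt p
  have hq : ∀ j, AnalyticAt ℂ (fun p : ((ι → ℂ) × (Fin d → ℂ)) × ℂ => p.1.2 j) p := fun j =>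
    ((ContinuousLinearMap.proj (R := ℂ) (φ := fun _ : Fin d => ℂ) j).comp
      ((ContinuousLinearMap.snd ℂ _ _).comp (ContinuousLinearMap.fst ℂ _ _))).analyticAt p
  have ht : AnalyticAt ℂ (fun p : ((ι → ℂ) × (Fin d → ℂ)) × ℂ => p.2) p := analyticAt_snd
  refine AnalyticAt.mul ?_ ?_
  · exact Finset.analyticAt_fun_sum _ fun k _ => (hq k).mul (ht.pow _)
  · refine Finset.analyticAt_fun_prod _ fun j hj => ?_
    have h1 : AnalyticAt ℂ (fun p : ((ι → ℂ) × (Fin d → ℂ)) × ℂ => 1 - p.1.1 j * p.2) p :=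
      analyticAt_const.sub ((he j).mul ht)
    have h2 := AnalyticAt.comp (g := rt)
      (f := fun p : ((ι → ℂ) × (Fin d → ℂ)) × ℂ => 1 - p.1.1 j * p.2) (rt_an (h j hj)) h1
    exact h2.inv (rt_ne (h j hj))

/-- cut plane -/
def Om (e : ι → ℂ) : Set ℂ := {t | ∀ j, 1 - e j * t ∈ Complex.slitPlane}

/-- strip around the `i`-th cut -/
def Ws (e : ι → ℂ) (i : ι) : Set ℂ := {t | ∀ j, j ≠ i → |(e i * t).im| < |(e i / e j).im|}

/-- nondegenerate position -/
def Good (e : ι → ℂ) : Prop := (∀ i, e i ≠ 0) ∧ ∀ i j, j ≠ i → (e i / e j).im ≠ 0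

lemma Ws_slit {e : ι → ℂ} {i j : ι} {t : ℂ} (ht : t ∈ Ws e i) (hj : j ≠ i) :
    1 - e j * t ∈ Complex.slitPlane := by
  by_contra h
  rw [Complex.mem_slitPlane_iff] at h
  push Not at h
  obtain ⟨h1, h2⟩ := h
  have hlt := ht j hj
  by_cases h0 : e j = 0
  · simp [h0] at h1; linarith
  set r := (e j * t).re with hr
  have h3 : e j * t = (r:ℂ) := by
    apply Complex.ext
    · simp [hr]
    · rw [Complex.sub_im, Complex.one_im] at h2
      rw [Complex.ofReal_im]; linarith
  have h4 : 1 ≤ r := by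
    simp only [Complex.sub_re, Complex.one_re] at h1
    linarith
  have h5 : e i * t = (r:ℂ) * (e i / e j) := by
    rw [← h3]; field_simp
  rw [h5, Complex.im_ofReal_mul] at hlt
  exact absurd hlt (not_lt.mpr (by
    rw [abs_mul, abs_of_pos (by linarith : 0 < r)]
    nlinarith [abs_nonneg (e i / e j).im]))

lemma Om_open (e : ι → ℂ) : IsOpen (Om e) := by
  have : Om e = ⋂ j, (fun t => 1 - e j * t) ⁻¹' Complex.slitPlane := by
    ext t; simp [Om]
  rw [this]
  exact isOpen_iInter_of_finite fun j => Complex.isOpen_slitPlane.preimage (by fun_prop)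

lemma Ws_open (e : ι → ℂ) (i : ι) : IsOpen (Ws e i) := by
  have : Ws e i = ⋂ j, ⋂ (_ : j ≠ i), {t | |(e i * t).im| < |(e i / e j).im|} := by
    ext t; simp [Ws]
  rw [this]
  refine isOpen_iInter_of_finite fun j => isOpen_iInter_of_finite fun _ => ?_
  exact isOpen_lt (by fun_prop) (by fun_prop)

lemma Om_zero (e : ι → ℂ) : (0:ℂ) ∈ Om e := by intro j; simp

lemma slit_star {w : ℂ} (h : 1 - w ∈ Complex.slitPlane) {u : ℝ} (hu : u ∈ Icc (0:ℝ) 1) :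
    1 - u * w ∈ Complex.slitPlane := by
  have := Complex.starConvex_one_slitPlane h (sub_nonneg.mpr hu.2) hu.1 (by ring)
  convert this using 1
  simp only [Complex.real_smul]
  push_cast
  ring

lemma Om_star {e : ι → ℂ} {t : ℂ} (h : t ∈ Om e) {u : ℝ} (hu : u ∈ Icc (0:ℝ) 1) :
    (u:ℂ) * t ∈ Om e := by
  intro j
  have := slit_star (h j) hu
  convert this using 1
  ring

lemma Ws_zero {e : ι → ℂ} (he : Good e) (i : ι) : (0:ℂ) ∈ Ws e i := by
  intro j hj
  simpa using he.2 i j hj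

lemma Ws_of_im {e : ι → ℂ} (he : Good e) {i : ι} {t : ℂ} (h : (e i * t).im = 0) : t ∈ Ws e i := by
  intro j hj
  rw [h]
  simpa using he.2 i j hj

lemma Ws_star {e : ι → ℂ} {i : ι} {t : ℂ} (h : t ∈ Ws e i) {u : ℝ} (hu : u ∈ Icc (0:ℝ) 1) :
    (u:ℂ) * t ∈ Ws e i := by
  intro j hj
  have h1 : e i * (u * t) = (u:ℂ) * (e i * t) := by ring
  rw [h1, Complex.im_ofReal_mul, abs_mul, abs_of_nonneg hu.1]
  have := h j hj
  nlinarith [abs_nonneg (e i * t).im, hu.2]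

lemma Ws_seg {e : ι → ℂ} (he : Good e) {i : ι} {t : ℂ} (h : t ∈ Ws e i) {u : ℝ}
    (hu : u ∈ Icc (0:ℝ) 1) : 1 / e i + (u:ℂ) ^ 2 * (t - 1 / e i) ∈ Ws e i := by
  have hu2 : u ^ 2 ∈ Icc (0:ℝ) 1 := ⟨by positivity, pow_le_one₀ hu.1 hu.2⟩
  intro j hj
  have h0 := he.1 i
  have h1 : e i * (1 / e i + (u:ℂ) ^ 2 * (t - 1 / e i)) = ((1 - u ^ 2 : ℝ) : ℂ) + ((u ^ 2 : ℝ):ℂ) * (e i * t) := by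
    push_cast
    field_simp
    ring
  rw [h1, Complex.add_im, Complex.ofReal_im, Complex.im_ofReal_mul, zero_add, abs_mul,
    abs_of_nonneg hu2.1]
  have := h j hj
  nlinarith [abs_nonneg (e i * t).im, hu2.2]

lemma Ws_of_not_slit {e : ι → ℂ} (he : Good e) {i : ι} {t : ℂ}
    (h : 1 - e i * t ∉ Complex.slitPlane) : t ∈ Ws e i := by
  apply Ws_of_im he
  rw [Complex.mem_slitPlane_iff] at h
  push Not at h
  have h2 := h.2
  rw [Complex.sub_im, Complex.one_im] at h2
  linarith

/-- gluing across the cuts -/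
lemma glue {e : ι → ℂ} (he : Good e) (S₀ : ℂ → ℂ) (S : ι → ℂ → ℂ)
    (h₀ : DifferentiableOn ℂ S₀ (Om e)) (h : ∀ i, DifferentiableOn ℂ (S i) (Ws e i))
    (hc : ∀ i, ∀ t ∈ Ws e i, t ∈ Om e → S₀ t = S i t) :
    ∃ T : ℂ → ℂ, Differentiable ℂ T ∧ (∀ t ∈ Om e, T t = S₀ t) ∧
      ∀ i, ∀ t ∈ Ws e i, T t = S i t := by
  classical
  have hex : ∀ t, t ∉ Om e → ∃ i, 1 - e i * t ∉ Complex.slitPlane := by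
    intro t ht; by_contra hh; push Not at hh; exact ht hh
  let T : ℂ → ℂ := fun t => if ht : t ∈ Om e then S₀ t else S (hex t ht).choose t
  have hT0 : ∀ t ∈ Om e, T t = S₀ t := fun t ht => by simp [T, ht]
  have hTi : ∀ i, ∀ t ∈ Ws e i, T t = S i t := by
    intro i t ht
    by_cases hO : t ∈ Om e
    · rw [hT0 t hO, hc i t ht hO]
    · have hi : (hex t hO).choose = i := by
        by_contra hne
        exact (hex t hO).choose_spec (Ws_slit ht hne)
      simp only [T, hO, dite_false, hi]
  refine ⟨T, ?_, hT0, hTi⟩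
  intro t
  by_cases hO : t ∈ Om e
  · refine (((h₀ t hO).differentiableAt ((Om_open e).mem_nhds hO))).congr_of_eventuallyEq ?_
    filter_upwards [(Om_open e).mem_nhds hO] with z hz using hT0 z hz
  · obtain ⟨i, hi⟩ := hex t hO
    have hW := Ws_of_not_slit he hi
    refine (((h i t hW).differentiableAt ((Ws_open e i).mem_nhds hW))).congr_of_eventuallyEq ?_
    filter_upwards [(Ws_open e i).mem_nhds hW] with z hz using hTi i z hz

/-- the abelian integral from `0` -/
noncomputable def Fi (p : ((ι → ℂ) × (Fin d → ℂ)) × ℂ) : ℂ :=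
  ∫ u in (0:ℝ)..1, p.2 * gfun Finset.univ (p.1, (u:ℂ) * p.2)

noncomputable def kint (i : ι) (p : (((ι → ℂ) × (Fin d → ℂ)) × ℂ) × ℂ) : ℂ :=
  -(2 / p.1.1.1 i) * gfun (Finset.univ.erase i)
    (p.1.1, 1 / p.1.1.1 i + p.2 ^ 2 * (p.1.2 - 1 / p.1.1.1 i))

/-- regular part of the abelian integral near the `i`-th branch point -/
noncomputable def Ki (i : ι) (p : ((ι → ℂ) × (Fin d → ℂ)) × ℂ) : ℂ :=
  ∫ u in (0:ℝ)..1, kint i (p, (u:ℂ))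

/-- half-period -/
noncomputable def Pp (i : ι) (x : (ι → ℂ) × (Fin d → ℂ)) : ℂ := - Ki i (x, 0)

lemma kint_an {x : (ι → ℂ) × (Fin d → ℂ)} (he : Good x.1) {i : ι} {t : ℂ} (ht : t ∈ Ws x.1 i)
    {u : ℝ} (hu : u ∈ Icc (0:ℝ) 1) : AnalyticAt ℂ (kint i) ((x, t), (u:ℂ)) := by
  have h1 : AnalyticAt ℂ (fun p : (((ι → ℂ) × (Fin d → ℂ)) × ℂ) × ℂ => p.1.1.1 i) ((x, t), (u:ℂ)) :=
    ((ContinuousLinearMap.proj (R := ℂ) (φ := fun _ : ι => ℂ) i).comp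
      ((ContinuousLinearMap.fst ℂ (ι → ℂ) (Fin d → ℂ)).comp
        ((ContinuousLinearMap.fst ℂ ((ι → ℂ) × (Fin d → ℂ)) ℂ).comp
        (ContinuousLinearMap.fst ℂ (((ι → ℂ) × (Fin d → ℂ)) × ℂ) ℂ)))).analyticAt _
  have h2 : AnalyticAt ℂ (fun p : (((ι → ℂ) × (Fin d → ℂ)) × ℂ) × ℂ => p.1.2) ((x, t), (u:ℂ)) :=
    analyticAt_snd.comp analyticAt_fst
  have h2' : AnalyticAt ℂ (fun p : (((ι → ℂ) × (Fin d → ℂ)) × ℂ) × ℂ => p.1.1) ((x, t), (u:ℂ)) :=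
    analyticAt_fst.comp analyticAt_fst
  have h3 : AnalyticAt ℂ (fun p : (((ι → ℂ) × (Fin d → ℂ)) × ℂ) × ℂ => p.2) ((x, t), (u:ℂ)) :=
    analyticAt_snd
  have h0 := he.1 i
  have h4 : AnalyticAt ℂ (fun p : (((ι → ℂ) × (Fin d → ℂ)) × ℂ) × ℂ => 1 / p.1.1.1 i)
    ((x, t), (u:ℂ)) := analyticAt_const.div h1 h0
  refine AnalyticAt.mul (analyticAt_const.div h1 h0).neg ?_
  have h5 := h2'.prod (h4.add ((h3.pow 2).mul (h2.sub h4)))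
  refine AnalyticAt.comp (g := gfun (Finset.univ.erase i)) (gfun_an ?_) h5
  intro j hj
  exact Ws_slit (Ws_seg he ht hu) (Finset.ne_of_mem_erase hj)

lemma gfun_an_Om {x : (ι → ℂ) × (Fin d → ℂ)} {t : ℂ} (ht : t ∈ Om x.1) :
    AnalyticAt ℂ (gfun Finset.univ) (x, t) := gfun_an fun j _ => ht j

lemma Fi_deriv {x : (ι → ℂ) × (Fin d → ℂ)} {t : ℂ} (ht : t ∈ Om x.1) :
    HasDerivAt (fun t => Fi (x, t)) (gfun Finset.univ (x, t)) t := by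
  refine prim_zero (h := fun z => gfun Finset.univ (x, z)) fun u hu => ?_
  exact (gfun_an_Om (Om_star ht hu)).comp (f := fun z => (x, z))
    (analyticAt_const.prod analyticAt_id)

lemma gfun_erase (x : (ι → ℂ) × (Fin d → ℂ)) (t : ℂ) (i : ι) :
    gfun Finset.univ (x, t) = gfun (Finset.univ.erase i) (x, t) / rt (1 - x.1 i * t) := by
  simp only [gfun]
  rw [← Finset.mul_prod_erase Finset.univ _ (Finset.mem_univ i)]
  ring

lemma Ki_deriv {x : (ι → ℂ) × (Fin d → ℂ)} (he : Good x.1) {i : ι} {t : ℂ} (ht : t ∈ Ws x.1 i) :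
    ∃ D, HasDerivAt (fun t => Ki i (x, t)) D t ∧
      (1 - x.1 i * t) * D = gfun (Finset.univ.erase i) (x, t) + x.1 i / 2 * Ki i (x, t) := by
  obtain ⟨D, hD, hE⟩ := prim_sq (h := fun z => gfun (Finset.univ.erase i) (x, z))
    (a := 1 / x.1 i) (t := t) (fun u hu => by
      refine AnalyticAt.comp (g := gfun (Finset.univ.erase i)) (f := fun z => (x, z)) (gfun_an ?_)
        (analyticAt_const.prod analyticAt_id)
      intro j hj
      exact Ws_slit (Ws_seg he ht hu) (Finset.ne_of_mem_erase hj))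
  have h0 := he.1 i
  have hK : ∀ t, Ki i (x, t) = -(2 / x.1 i) *
      ∫ u in (0:ℝ)..1, gfun (Finset.univ.erase i) (x, 1 / x.1 i + (u:ℂ) ^ 2 * (t - 1 / x.1 i)) := by
    intro t
    rw [← intervalIntegral.integral_const_mul]
    rfl
  refine ⟨-(2 / x.1 i) * D, ?_, ?_⟩
  · have := hD.const_mul (-(2 / x.1 i))
    refine this.congr_of_eventuallyEq (Eventually.of_forall fun t => hK t)
  · rw [hK]
    have e1 : (1 - x.1 i * t) * (-(2 / x.1 i) * D) = 2 * (t - 1 / x.1 i) * D := by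
      field_simp; ring
    rw [e1, hE]
    generalize (∫ u in (0:ℝ)..1, gfun (Finset.univ.erase i)
      (x, 1 / x.1 i + (u:ℂ) ^ 2 * (t - 1 / x.1 i))) = Z
    field_simp
    ring

lemma Fi_zero (x : (ι → ℂ) × (Fin d → ℂ)) : Fi (x, 0) = 0 := by simp [Fi]

lemma rtlin_deriv {e t : ℂ} (h : 1 - e * t ∈ Complex.slitPlane) :
    HasDerivAt (fun t => rt (1 - e * t)) (1 / (2 * rt (1 - e * t)) * (-e)) t := by
  have h1 : HasDerivAt (fun t => 1 - e * t) (-e) t := by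
    simpa using ((hasDerivAt_id t).const_mul e).const_sub 1
  exact HasDerivAt.comp (h := fun t => 1 - e * t) t (rt_deriv h) h1

lemma Fi_eq {x : (ι → ℂ) × (Fin d → ℂ)} (he : Good x.1) {i : ι} {t : ℂ} (ht : t ∈ Ws x.1 i)
    (hO : t ∈ Om x.1) : Fi (x, t) = Pp i x + rt (1 - x.1 i * t) * Ki i (x, t) := by
  have hd : ∀ z ∈ Ws x.1 i, z ∈ Om x.1 →
      HasDerivAt (fun z => Fi (x, z) - rt (1 - x.1 i * z) * Ki i (x, z)) 0 z := by
    intro z hz hzO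
    obtain ⟨D, hD, hE⟩ := Ki_deriv he hz
    have h1 := (Fi_deriv hzO).sub ((rtlin_deriv (hzO i)).mul hD)
    refine HasDerivAt.congr_deriv h1 ?_
    rw [gfun_erase x z i]
    have hs := rt_ne (hzO i)
    have hs2 := rt_sq (1 - x.1 i * z)
    have hg : gfun (Finset.univ.erase i) (x, z) = rt (1 - x.1 i * z) ^ 2 * D - x.1 i / 2 * Ki i (x, z) := by
      rw [hs2, hE]; ring
    rw [hg]
    field_simp
    ring
  have hc : ∀ s ∈ Icc (0:ℝ) 1, HasDerivAt (fun s : ℝ => Fi (x, (s:ℂ) * t) -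
      rt (1 - x.1 i * ((s:ℂ) * t)) * Ki i (x, (s:ℂ) * t)) 0 s := by
    intro s hs
    have e5 : HasDerivAt (fun u : ℝ => (u:ℂ) * t) (1 * t) s :=
      Complex.ofRealCLM.hasDerivAt.mul_const t
    have := HasDerivAt.comp (h := fun u : ℝ => (u:ℂ) * t) s (hd _ (Ws_star ht hs) (Om_star hO hs)) e5
    exact HasDerivAt.congr_deriv this (by simp)
  have := constant_of_has_deriv_right_zero (a := 0) (b := 1)
    (fun s hs => (hc s hs).continuousAt.continuousWithinAt)
    (fun s hs => (hc s (Ico_subset_Icc_self hs)).hasDerivWithinAt) 1 (by simp)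
  simp only [Complex.ofReal_one, one_mul, Complex.ofReal_zero, zero_mul, mul_zero, sub_zero,
    rt_one, Fi_zero] at this
  rw [Pp]
  linear_combination this

end Setup
set_option linter.unusedSectionVars false

section Setup2

variable {ι : Type} [Fintype ι] [DecidableEq ι] {d : ℕ}

noncomputable def fv (x v : (ι → ℂ) × (Fin d → ℂ)) (z : ℂ) : ℂ := pderiv1 (gfun Finset.univ) (x, z) v

noncomputable def Fv (x v : (ι → ℂ) × (Fin d → ℂ)) (t : ℂ) : ℂ :=
  ∫ u in (0:ℝ)..1, t * fv x v ((u:ℂ) * t)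

noncomputable def Kv (i : ι) (x v : (ι → ℂ) × (Fin d → ℂ)) (t : ℂ) : ℂ :=
  ∫ u in (0:ℝ)..1, pderiv1 (kint i) ((x, t), (u:ℂ)) (v, 0)

lemma Fv_deriv {x v : (ι → ℂ) × (Fin d → ℂ)} {t : ℂ} (ht : t ∈ Om x.1) :
    HasDerivAt (Fv x v) (fv x v t) t := by
  refine prim_zero (h := fv x v) fun u hu => ?_
  have h1 := pderiv1_an (gfun_an_Om (Om_star ht hu))
  have h2 : AnalyticAt ℂ (fun z => pderiv1 (gfun Finset.univ) (x, z)) ((u:ℂ) * t) :=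
    h1.comp (f := fun z => (x, z)) (analyticAt_const.prod analyticAt_id)
  exact ((ContinuousLinearMap.apply ℂ ℂ v).analyticAt _).comp h2

lemma Fi_fderiv {x : (ι → ℂ) × (Fin d → ℂ)} {t : ℂ} (ht : t ∈ Om x.1) :
    ∃ L : ((ι → ℂ) × (Fin d → ℂ)) →L[ℂ] ℂ, HasFDerivAt (fun x => Fi (x, t)) L x ∧
      ∀ v, L v = Fv x v t := by
  set k : ((ι → ℂ) × (Fin d → ℂ)) × ℂ → ℂ := fun p => t * gfun Finset.univ (p.1, p.2 * t) with hk
  have hka : ∀ u ∈ Icc (0:ℝ) 1, AnalyticAt ℂ k (x, (u:ℂ)) := by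
    intro u hu
    refine analyticAt_const.mul ?_
    exact AnalyticAt.comp (x := (x, (u:ℂ))) (gfun_an_Om (Om_star ht hu))
      (f := fun p : ((ι → ℂ) × (Fin d → ℂ)) × ℂ => (p.1, p.2 * t))
      (analyticAt_fst.prod (analyticAt_snd.mul analyticAt_const))
  refine ⟨_, paramInt_fderiv hka, fun v => ?_⟩
  rw [paramInt_apply hka]
  refine intervalIntegral.integral_congr fun u hu => ?_
  rw [uIcc_of_le zero_le_one] at hu
  have h1 := pderiv1_has (hka u hu)
  have h2 := (pderiv1_has (gfun_an_Om (Om_star ht hu))).const_smul t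
  have h3 : pderiv1 k (x, (u:ℂ)) = t • pderiv1 (gfun Finset.univ) (x, (u:ℂ) * t) := h1.unique h2
  simp only [h3, fv]
  rfl

lemma Ki_fderiv {x : (ι → ℂ) × (Fin d → ℂ)} (he : Good x.1) {i : ι} {t : ℂ} (ht : t ∈ Ws x.1 i) :
    ∃ L : ((ι → ℂ) × (Fin d → ℂ)) →L[ℂ] ℂ, HasStrictFDerivAt (fun x => Ki i (x, t)) L x ∧
      ∀ v, L v = Kv i x v t := by
  have hka : ∀ u ∈ Icc (0:ℝ) 1, AnalyticAt ℂ (kint i) ((x, t), (u:ℂ)) := fun u hu => kint_an he ht hu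
  have h1 := paramInt_strict hka
  have h2 : HasStrictFDerivAt (fun x : (ι → ℂ) × (Fin d → ℂ) => (x, t))
    ((ContinuousLinearMap.id ℂ _).prod 0) x :=
    (hasStrictFDerivAt_id x).prodMk (hasStrictFDerivAt_const t x)
  refine ⟨_, HasStrictFDerivAt.comp (f := fun x : (ι → ℂ) × (Fin d → ℂ) => (x, t)) x h1 h2,
    fun v => ?_⟩
  simp only [ContinuousLinearMap.comp_apply]
  erw [paramInt_apply hka]
  rfl

lemma Kv_diff {x : (ι → ℂ) × (Fin d → ℂ)} (he : Good x.1) {i : ι} {t : ℂ} (ht : t ∈ Ws x.1 i)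
    (v : (ι → ℂ) × (Fin d → ℂ)) : DifferentiableAt ℂ (Kv i x v) t := by
  have hka : ∀ u ∈ Icc (0:ℝ) 1, AnalyticAt ℂ
      (fun p : ℂ × ℂ => pderiv1 (kint i) ((x, p.1), p.2) (v, 0)) (t, (u:ℂ)) := by
    intro u hu
    have h1 := pderiv1_an (kint_an he ht hu)
    have h2 : AnalyticAt ℂ (fun p : ℂ × ℂ => pderiv1 (kint i) ((x, p.1), p.2)) (t, (u:ℂ)) :=
      AnalyticAt.comp (x := (t, (u:ℂ))) h1 (f := fun p : ℂ × ℂ => ((x, p.1), p.2))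
        ((analyticAt_const.prod analyticAt_fst).prod analyticAt_snd)
    exact ((ContinuousLinearMap.apply ℂ ℂ
      ((v, 0) : ((ι → ℂ) × (Fin d → ℂ)) × ℂ)).analyticAt _).comp h2
  exact (paramInt_fderiv hka).differentiableAt

lemma Pp_strict {x : (ι → ℂ) × (Fin d → ℂ)} (he : Good x.1) (i : ι) :
    ∃ L : ((ι → ℂ) × (Fin d → ℂ)) →L[ℂ] ℂ, HasStrictFDerivAt (Pp i) L x ∧
      ∀ v, L v = - Kv i x v 0 := by
  obtain ⟨L, hL, hv⟩ := Ki_fderiv he (Ws_zero he i)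
  exact ⟨-L, hL.neg, fun v => by simp [hv]⟩

lemma Good_open {e : ι → ℂ} (he : Good e) : ∀ᶠ e' in 𝓝 e, Good e' := by
  have h1 : ∀ᶠ e' in 𝓝 e, ∀ i, e' i ≠ 0 :=
    eventually_all.2 fun i => (continuous_apply i).continuousAt.eventually_ne (he.1 i)
  have h2 : ∀ᶠ e' in 𝓝 e, ∀ i j, j ≠ i → (e' i / e' j).im ≠ 0 := by
    refine eventually_all.2 fun i => eventually_all.2 fun j => eventually_all.2 fun hj => ?_
    have : ContinuousAt (fun e' : ι → ℂ => (e' i / e' j).im) e :=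
      Complex.continuous_im.continuousAt.comp
        ((continuous_apply i).continuousAt.div (continuous_apply j).continuousAt (he.1 j))
    exact this.eventually_ne (he.2 i j hj)
  exact h1.and h2

lemma Om_ev {e : ι → ℂ} {t : ℂ} (ht : t ∈ Om e) : ∀ᶠ e' in 𝓝 e, t ∈ Om e' := by
  refine eventually_all.2 fun j => ?_
  have : ContinuousAt (fun e' : ι → ℂ => 1 - e' j * t) e :=
    continuousAt_const.sub ((continuous_apply j).continuousAt.mul continuousAt_const)
  exact this.eventually (Complex.isOpen_slitPlane.mem_nhds (ht j))

lemma Ws_ev {e : ι → ℂ} (he : Good e) {i : ι} {t : ℂ} (ht : t ∈ Ws e i) :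
    ∀ᶠ e' in 𝓝 e, t ∈ Ws e' i := by
  refine eventually_all.2 fun j => eventually_all.2 fun hj => ?_
  have h1 : ContinuousAt (fun e' : ι → ℂ => |(e' i * t).im|) e := by fun_prop
  have h2 : ContinuousAt (fun e' : ι → ℂ => |(e' i / e' j).im|) e :=
    (Complex.continuous_im.continuousAt.comp
        ((continuous_apply i).continuousAt.div (continuous_apply j).continuousAt (he.1 j))).abs
  exact h1.eventually_lt h2 (ht j hj)

lemma Fv_eq {x : (ι → ℂ) × (Fin d → ℂ)} (he : Good x.1) {i : ι} {t : ℂ} (ht : t ∈ Ws x.1 i)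
    (hO : t ∈ Om x.1) (v : (ι → ℂ) × (Fin d → ℂ)) :
    Fv x v t = - Kv i x v 0 + 1 / (2 * rt (1 - x.1 i * t)) * (- (v.1 i * t)) * Ki i (x, t)
      + rt (1 - x.1 i * t) * Kv i x v t := by
  obtain ⟨LF, hF, hF'⟩ := Fi_fderiv hO
  obtain ⟨LP, hP, hP'⟩ := Pp_strict (x := x) he i
  obtain ⟨LK, hK, hK'⟩ := Ki_fderiv he ht
  have hline : HasDerivAt (fun s : ℂ => x + s • v) v 0 := by
    simpa using ((hasDerivAt_id (0:ℂ)).smul_const v).const_add x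
  have hx0 : x + (0:ℂ) • v = x := by simp
  have dF : HasDerivAt (fun s : ℂ => Fi (x + s • v, t)) (LF v) 0 := by
    rw [← hx0] at hF
    exact HasFDerivAt.comp_hasDerivAt (f := fun s : ℂ => x + s • v) 0 hF hline
  have dP : HasDerivAt (fun s : ℂ => Pp i (x + s • v)) (LP v) 0 := by
    rw [← hx0] at hP
    exact HasFDerivAt.comp_hasDerivAt (f := fun s : ℂ => x + s • v) 0 hP.hasFDerivAt hline
  have dK : HasDerivAt (fun s : ℂ => Ki i (x + s • v, t)) (LK v) 0 := by
    rw [← hx0] at hK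
    exact HasFDerivAt.comp_hasDerivAt (f := fun s : ℂ => x + s • v) 0 hK.hasFDerivAt hline
  have dlin : HasDerivAt (fun s : ℂ => 1 - (x + s • v).1 i * t) (-(v.1 i * t)) 0 := by
    have := ((((hasDerivAt_id (0:ℂ)).mul_const (v.1 i)).const_add (x.1 i)).mul_const t).const_sub 1
    simpa using this
  have dR : HasDerivAt (fun s : ℂ => rt (1 - (x + s • v).1 i * t))
      (1 / (2 * rt (1 - x.1 i * t)) * (-(v.1 i * t))) 0 := by
    have h0 : HasDerivAt rt (1 / (2 * rt (1 - x.1 i * t))) (1 - (x + (0:ℂ) • v).1 i * t) := by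
      rw [hx0]; exact rt_deriv (hO i)
    exact HasDerivAt.comp (h := fun s : ℂ => 1 - (x + s • v).1 i * t) 0 h0 dlin
  have hcont : Tendsto (fun s : ℂ => (x + s • v).1) (𝓝 0) (𝓝 x.1) := by
    have : Continuous (fun s : ℂ => (x + s • v).1) := by fun_prop
    have h := this.tendsto 0
    simpa using h
  have hev : (fun s : ℂ => Fi (x + s • v, t)) =ᶠ[𝓝 0] fun s : ℂ => Pp i (x + s • v) +
      rt (1 - (x + s • v).1 i * t) * Ki i (x + s • v, t) := by
    filter_upwards [hcont.eventually (Good_open he), hcont.eventually (Om_ev hO),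
      hcont.eventually (Ws_ev he ht)] with s h1 h2 h3 using Fi_eq h1 h3 h2
  have dS := dP.add (dR.mul dK)
  have := (dF.congr_of_eventuallyEq hev.symm).unique dS
  rw [hF', hP', hK'] at this
  rw [this]
  simp only [zero_smul, add_zero]
  ring

/-- the polynomial `Q` -/
noncomputable def Qe (q : Fin d → ℂ) (z : ℂ) : ℂ := ∑ k : Fin d, q k * z ^ (k:ℕ)

lemma fv_eq {x v : (ι → ℂ) × (Fin d → ℂ)} {z : ℂ} (hz : z ∈ Om x.1) :
    fv x v z = gfun Finset.univ ((x.1, v.2), z) +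
      gfun Finset.univ (x, z) * ∑ j, v.1 j * z / (2 * (1 - x.1 j * z)) := by
  have hline : HasDerivAt (fun s : ℂ => x + s • v) v 0 := by
    simpa using ((hasDerivAt_id (0:ℂ)).smul_const v).const_add x
  have hx0 : x + (0:ℂ) • v = x := by simp
  have d1 : HasDerivAt (fun s : ℂ => gfun Finset.univ (x + s • v, z)) (fv x v z) 0 := by
    have hF := pderiv1_has (gfun_an_Om hz)
    have hF2 : HasFDerivAt (fun x => gfun Finset.univ (x, z)) (pderiv1 (gfun Finset.univ) (x, z))
      (x + (0:ℂ) • v) := by rw [hx0]; exact hF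
    exact HasFDerivAt.comp_hasDerivAt (f := fun s : ℂ => x + s • v) 0 hF2 hline
  have dq : HasDerivAt (fun s : ℂ => ∑ k : Fin d, (x + s • v).2 k * z ^ (k:ℕ)) (Qe v.2 z) 0 := by
    refine HasDerivAt.fun_sum fun k _ => ?_
    have := (((hasDerivAt_id (0:ℂ)).mul_const (v.2 k)).const_add (x.2 k)).mul_const (z ^ (k:ℕ))
    simpa using this
  have dr : ∀ j ∈ Finset.univ, HasDerivAt (fun s : ℂ => (rt (1 - (x + s • v).1 j * z))⁻¹)
      ((rt (1 - x.1 j * z))⁻¹ * (v.1 j * z / (2 * (1 - x.1 j * z)))) 0 := by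
    intro j _
    have dlin : HasDerivAt (fun s : ℂ => 1 - (x + s • v).1 j * z) (-(v.1 j * z)) 0 := by
      have := ((((hasDerivAt_id (0:ℂ)).mul_const (v.1 j)).const_add (x.1 j)).mul_const z).const_sub 1
      simpa using this
    have h0 : HasDerivAt rt (1 / (2 * rt (1 - x.1 j * z))) (1 - (x + (0:ℂ) • v).1 j * z) := by
      rw [hx0]; exact rt_deriv (hz j)
    have dR := HasDerivAt.comp (h := fun s : ℂ => 1 - (x + s • v).1 j * z) 0 h0 dlin
    have hn := rt_ne (hz j)
    have := dR.inv (by simpa using hn)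
    refine HasDerivAt.congr_deriv this ?_
    simp only [Function.comp, zero_smul, add_zero]
    rw [← rt_sq (1 - x.1 j * z)]
    rw [rt_sq]
    have h2 := rt_sq (1 - x.1 j * z)
    have h3 : v.1 j * z / (2 * (1 - x.1 j * z)) = v.1 j * z / (2 * rt (1 - x.1 j * z) ^ 2) := by
      rw [h2]
    rw [h3]
    field_simp
  have dp := HasDerivAt.fun_finsetProd dr
  have d2 := dq.mul dp
  have := d1.unique d2
  rw [this]
  simp only [zero_smul, add_zero, smul_eq_mul, gfun, Qe]
  have hE : ∀ j ∈ (Finset.univ : Finset ι), (∏ a ∈ Finset.univ.erase j, (rt (1 - x.1 a * z))⁻¹) *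
      ((rt (1 - x.1 j * z))⁻¹ * (v.1 j * z / (2 * (1 - x.1 j * z)))) =
      (∏ a, (rt (1 - x.1 a * z))⁻¹) * (v.1 j * z / (2 * (1 - x.1 j * z))) := by
    intro j hj
    rw [← Finset.mul_prod_erase Finset.univ _ hj]
    ring
  rw [Finset.sum_congr rfl hE, ← Finset.mul_sum]
  ring

end Setup2
set_option linter.unusedSectionVars false

section Growth

variable {ι : Type} [Fintype ι] [DecidableEq ι] {d : ℕ}

lemma rt_norm_sq (w : ℂ) : ‖rt w‖ ^ 2 = ‖w‖ := by rw [← norm_pow, rt_sq]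

/-- the square root of `∏ (1 - e j t)` -/
noncomputable def wf (e : ι → ℂ) (t : ℂ) : ℂ := ∏ j, rt (1 - e j * t)

lemma wf_sq (e : ι → ℂ) (t : ℂ) : wf e t ^ 2 = ∏ j, (1 - e j * t) := by
  rw [wf, ← Finset.prod_pow]
  exact Finset.prod_congr rfl fun j _ => rt_sq _

lemma wf_ne {e : ι → ℂ} {t : ℂ} (ht : t ∈ Om e) : wf e t ≠ 0 :=
  Finset.prod_ne_zero_iff.2 fun j _ => rt_ne (ht j)

lemma wf_diff {e : ι → ℂ} {t : ℂ} (ht : t ∈ Om e) : DifferentiableAt ℂ (wf e) t := by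
  have : wf e = fun t => ∏ j, rt (1 - e j * t) := rfl
  rw [this]
  exact DifferentiableAt.fun_finsetProd fun j _ => (rtlin_deriv (ht j)).differentiableAt

lemma gfun_wf (x : (ι → ℂ) × (Fin d → ℂ)) (t : ℂ) :
    gfun Finset.univ (x, t) = Qe x.2 t * (wf x.1 t)⁻¹ := by
  simp [gfun, Qe, wf]

/-- radius beyond which everything is controlled -/
lemma w_bounds {e : ι → ℂ} (he : ∀ i, e i ≠ 0) (hcard : Fintype.card ι = 2 * d) :
    ∃ R : ℝ, ∃ c : ℝ, ∃ C : ℝ, 1 ≤ R ∧ 0 < c ∧ 0 < C ∧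
      (∀ z : ℂ, R ≤ ‖z‖ → ∀ j, ‖e j‖ * ‖z‖ / 2 ≤ ‖1 - e j * z‖) ∧
      (∀ z : ℂ, R ≤ ‖z‖ → c * ‖z‖ ^ d ≤ ‖wf e z‖) ∧
      (∀ z : ℂ, R ≤ ‖z‖ → ‖wf e z‖ ≤ C * ‖z‖ ^ d) := by
  have hpos : ∀ i, 0 < ‖e i‖ := fun i => norm_pos_iff.2 (he i)
  have hl : ∀ z : ℂ, 1 + ∑ j, 2 / ‖e j‖ ≤ ‖z‖ → ∀ j, ‖e j‖ * ‖z‖ / 2 ≤ ‖1 - e j * z‖ := by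
    intro z hz j
    have h1 : 2 / ‖e j‖ ≤ ∑ j, 2 / ‖e j‖ :=
      Finset.single_le_sum (f := fun j => 2 / ‖e j‖) (fun i _ => by have := hpos i; positivity)
        (Finset.mem_univ j)
    have h2 : 2 / ‖e j‖ ≤ ‖z‖ := by linarith
    rw [div_le_iff₀ (hpos j)] at h2
    have h3 : ‖e j * z‖ - ‖(1:ℂ)‖ ≤ ‖e j * z - 1‖ := norm_sub_norm_le _ _
    rw [norm_sub_rev, norm_mul, norm_one] at h3
    linarith
  have hR : (1:ℝ) ≤ 1 + ∑ j, 2 / ‖e j‖ := by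
    have : 0 ≤ ∑ j, 2 / ‖e j‖ := Finset.sum_nonneg fun i _ => by have := hpos i; positivity
    linarith
  have hsq : ∀ z, ‖wf e z‖ ^ 2 = ∏ j, ‖1 - e j * z‖ := by
    intro z; rw [← norm_pow, wf_sq, norm_prod]
  have hc0 : 0 < ∏ j, (‖e j‖ / 2) := Finset.prod_pos fun j _ => by have := hpos j; positivity
  have hC0 : 0 < ∏ j, (1 + ‖e j‖) := Finset.prod_pos fun j _ => by have := hpos j; positivity
  refine ⟨_, √(∏ j, (‖e j‖ / 2)), √(∏ j, (1 + ‖e j‖)), hR, Real.sqrt_pos.2 hc0, Real.sqrt_pos.2 hC0,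
    hl, fun z hz => ?_, fun z hz => ?_⟩
  · refine le_of_sq_le_sq ?_ (norm_nonneg _)
    rw [hsq, mul_pow, Real.sq_sqrt hc0.le, ← pow_mul, mul_comm d 2, ← hcard, ← Finset.card_univ,
      ← Finset.prod_const, ← Finset.prod_mul_distrib]
    refine Finset.prod_le_prod (fun j _ => by positivity) fun j _ => ?_
    have := hl z hz j
    linarith
  · refine le_of_sq_le_sq ?_ (by positivity)
    rw [hsq, mul_pow, Real.sq_sqrt hC0.le, ← pow_mul, mul_comm d 2, ← hcard, ← Finset.card_univ,
      ← Finset.prod_const, ← Finset.prod_mul_distrib]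
    refine Finset.prod_le_prod (fun j _ => by positivity) fun j _ => ?_
    have h1 : ‖1 - e j * z‖ ≤ ‖(1:ℂ)‖ + ‖e j * z‖ := norm_sub_le _ _
    rw [norm_one, norm_mul] at h1
    nlinarith

lemma Q_bound (q : Fin d → ℂ) {z : ℂ} (hz : 1 ≤ ‖z‖) :
    ‖Qe q z‖ * ‖z‖ ≤ (∑ k, ‖q k‖) * ‖z‖ ^ d := by
  rw [Qe, Finset.sum_mul]
  calc _ ≤ (∑ k : Fin d, ‖q k * z ^ (k:ℕ)‖) * ‖z‖ := by gcongr; exact norm_sum_le _ _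
    _ = ∑ k : Fin d, ‖q k‖ * ‖z‖ ^ ((k:ℕ) + 1) := by
      rw [Finset.sum_mul]; refine Finset.sum_congr rfl fun k _ => ?_
      rw [norm_mul, norm_pow, pow_succ]; ring
    _ ≤ _ := by
      refine Finset.sum_le_sum fun k _ => ?_
      gcongr
      exact k.2

lemma g_bound {e : ι → ℂ} (q : Fin d → ℂ) {R c : ℝ} (hR : 1 ≤ R) (hc : 0 < c)
    (hw : ∀ z : ℂ, R ≤ ‖z‖ → c * ‖z‖ ^ d ≤ ‖wf e z‖) {z : ℂ} (hz : R ≤ ‖z‖) :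
    ‖gfun Finset.univ ((e, q), z)‖ * ‖z‖ ≤ (∑ k, ‖q k‖) / c := by
  rw [gfun_wf, norm_mul, norm_inv]
  have h1 := Q_bound q (hR.trans hz)
  have h2 := hw z hz
  have hz0 : 0 < ‖z‖ := by linarith
  have h3 : 0 < c * ‖z‖ ^ d := by positivity
  have h4 : 0 < ‖wf e z‖ := h3.trans_le h2
  simp only
  rw [mul_right_comm, ← div_eq_mul_inv, div_le_div_iff₀ h4 hc]
  have h5 : 0 ≤ ∑ k, ‖q k‖ := Finset.sum_nonneg fun _ _ => norm_nonneg _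
  nlinarith

lemma fv_bound {x v : (ι → ℂ) × (Fin d → ℂ)} (he : ∀ i, x.1 i ≠ 0) {R c : ℝ} (hR : 1 ≤ R) (hc : 0 < c)
    (hl : ∀ z : ℂ, R ≤ ‖z‖ → ∀ j, ‖x.1 j‖ * ‖z‖ / 2 ≤ ‖1 - x.1 j * z‖)
    (hw : ∀ z : ℂ, R ≤ ‖z‖ → c * ‖z‖ ^ d ≤ ‖wf x.1 z‖) :
    ∃ C, 0 ≤ C ∧ ∀ z ∈ Om x.1, R ≤ ‖z‖ → ‖fv x v z‖ * ‖z‖ ≤ C := by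
  refine ⟨(∑ k, ‖v.2 k‖) / c + (∑ k, ‖x.2 k‖) / c * ∑ j, ‖v.1 j‖ / ‖x.1 j‖, by positivity,
    fun z hz hzR => ?_⟩
  rw [fv_eq hz]
  have h1 := g_bound (e := x.1) v.2 hR hc hw hzR
  have h2 := g_bound (e := x.1) x.2 hR hc hw hzR
  have hz0 : 0 < ‖z‖ := by linarith
  have h3 : ‖∑ j, v.1 j * z / (2 * (1 - x.1 j * z))‖ ≤ ∑ j, ‖v.1 j‖ / ‖x.1 j‖ := by
    refine (norm_sum_le _ _).trans (Finset.sum_le_sum fun j _ => ?_)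
    have hp : 0 < ‖x.1 j‖ := norm_pos_iff.2 (he j)
    have h4 := hl z hzR j
    have h5 : 0 < ‖x.1 j‖ * ‖z‖ / 2 := by positivity
    rw [norm_div, norm_mul, norm_mul, Complex.norm_ofNat, div_le_div_iff₀ (by linarith) hp]
    have := norm_nonneg (v.1 j)
    nlinarith
  calc _ ≤ (‖gfun Finset.univ ((x.1, v.2), z)‖ + ‖gfun Finset.univ (x, z)‖ *
        ‖∑ j, v.1 j * z / (2 * (1 - x.1 j * z))‖) * ‖z‖ := by
        gcongr; exact (norm_add_le _ _).trans (by rw [norm_mul])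
    _ = ‖gfun Finset.univ ((x.1, v.2), z)‖ * ‖z‖ + (‖gfun Finset.univ (x, z)‖ * ‖z‖) *
        ‖∑ j, v.1 j * z / (2 * (1 - x.1 j * z))‖ := by ring
    _ ≤ _ := by gcongr

lemma radial {e : ι → ℂ} {H h : ℂ → ℂ} {R C : ℝ} (hR : 0 < R)
    (hH : ∀ z ∈ Om e, HasDerivAt H (h z) z) (hb : ∀ z ∈ Om e, R ≤ ‖z‖ → ‖h z‖ * ‖z‖ ≤ C)
    {t : ℂ} (ht : t ∈ Om e) (htR : R ≤ ‖t‖) :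
    ∃ t0 ∈ Om e, ‖t0‖ = R ∧ ‖H t - H t0‖ ≤ C * Real.log (‖t‖ / R) := by
  have ht0 : 0 < ‖t‖ := by linarith
  set L := Real.log (‖t‖ / R) with hL
  have hL0 : 0 ≤ L := Real.log_nonneg ((one_le_div hR).2 htR)
  have hexpL : Real.exp L = ‖t‖ / R := Real.exp_log (by positivity)
  -- the path
  have hmem : ∀ y ∈ Icc (0:ℝ) L, ((Real.exp (y - L) : ℝ) : ℂ) * t ∈ Om e := fun y hy =>
    Om_star ht ⟨(Real.exp_pos _).le, Real.exp_le_one_iff.2 (by linarith [hy.2])⟩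
  have hnorm : ∀ y, ‖((Real.exp (y - L) : ℝ) : ℂ) * t‖ = R * Real.exp y := by
    intro y
    rw [norm_mul, Complex.norm_real, Real.norm_of_nonneg (Real.exp_pos _).le, Real.exp_sub, hexpL]
    field_simp
  have hder : ∀ y ∈ Icc (0:ℝ) L, HasDerivWithinAt (fun y : ℝ => H (((Real.exp (y - L) : ℝ) : ℂ) * t))
      (h (((Real.exp (y - L) : ℝ) : ℂ) * t) * (((Real.exp (y - L) : ℝ) : ℂ) * t)) (Icc 0 L) y := by
    intro y hy
    have h1 : HasDerivAt (fun y : ℝ => Real.exp (y - L)) (Real.exp (y - L)) y := by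
      simpa using ((hasDerivAt_id y).sub_const L).exp
    have h2 := (h1.ofReal_comp).mul_const t
    have h3 := HasDerivAt.comp y (hH _ (hmem y hy)) h2
    exact h3.hasDerivWithinAt
  have hbd : ∀ y ∈ Ico (0:ℝ) L,
      ‖h (((Real.exp (y - L) : ℝ) : ℂ) * t) * (((Real.exp (y - L) : ℝ) : ℂ) * t)‖ ≤ C := by
    intro y hy
    rw [norm_mul]
    refine hb _ (hmem y ⟨hy.1, hy.2.le⟩) ?_
    rw [hnorm]
    have := Real.one_le_exp hy.1
    nlinarith
  refine ⟨_, hmem 0 ⟨le_rfl, hL0⟩, by rw [hnorm]; simp, ?_⟩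
  have := norm_image_sub_le_of_norm_deriv_le_segment' hder hbd L ⟨hL0, le_rfl⟩
  simpa using this

lemma slit_dense : Dense Complex.slitPlane := by
  intro z
  have h1 : Tendsto (fun n : ℝ => z + (n:ℂ) * Complex.I) (𝓝[≠] 0) (𝓝 z) := by
    have : Continuous (fun n : ℝ => z + (n:ℂ) * Complex.I) := by fun_prop
    have h := this.tendsto 0
    simp only [Complex.ofReal_zero, zero_mul, add_zero] at h
    exact h.mono_left nhdsWithin_le_nhds
  by_cases hz : z.im = 0
  · refine mem_closure_of_tendsto h1 ?_
    filter_upwards [self_mem_nhdsWithin] with n hn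
    right
    simpa [hz] using hn
  · exact subset_closure (Or.inr hz)

lemma Om_dense {e : ι → ℂ} (he : ∀ i, e i ≠ 0) : Dense (Om e) := by
  have : Om e = ⋂ j, (fun t => 1 - e j * t) ⁻¹' Complex.slitPlane := by
    ext t; simp [Om]
  rw [this]
  refine dense_iInter_of_isOpen (fun j => Complex.isOpen_slitPlane.preimage (by fun_prop)) fun j => ?_
  refine slit_dense.preimage ?_
  exact ((Homeomorph.mulLeft₀ (e j) (he j)).trans (Homeomorph.subLeft (1:ℂ))).isOpenMap

lemma poly_of_growth_Om {e : ι → ℂ} (he : ∀ i, e i ≠ 0) {T : ℂ → ℂ} (hT : Differentiable ℂ T)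
    (n : ℕ) {ρ R C : ℝ} (h0 : 0 ≤ ρ) (hρ : ρ < n + 1) (hR : 0 < R)
    (hb : ∀ t ∈ Om e, R ≤ ‖t‖ → ‖T t‖ ≤ C * ‖t‖ ^ ρ) :
    ∃ p : ℂ[X], p.natDegree ≤ n ∧ ∀ t, T t = p.eval t := by
  refine poly_of_growth hT n hρ (R := R + 1) (C := C) (by linarith) fun t ht => ?_
  by_contra hcon
  push Not at hcon
  have hc1 : Continuous fun t : ℂ => C * ‖t‖ ^ ρ :=
    continuous_const.mul (continuous_norm.rpow_const fun _ => Or.inr h0)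
  have ho : IsOpen ({t : ℂ | C * ‖t‖ ^ ρ < ‖T t‖} ∩ {t : ℂ | R < ‖t‖}) :=
    (isOpen_lt hc1 hT.continuous.norm).inter (isOpen_lt continuous_const continuous_norm)
  obtain ⟨z, ⟨hz1, hz2⟩, hz3⟩ := (Om_dense he).inter_open_nonempty _ ho
    ⟨t, hcon, by show R < ‖t‖; linarith⟩
  exact absurd (hb z hz3 (le_of_lt hz2)) (not_le.2 hz1)

lemma sphere_bd {T : ℂ → ℂ} (hT : Continuous T) (R : ℝ) : ∃ M, 0 ≤ M ∧ ∀ t, ‖t‖ = R → ‖T t‖ ≤ M := by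
  obtain ⟨M, hM⟩ := (isCompact_sphere (0:ℂ) R).exists_bound_of_continuousOn hT.continuousOn
  refine ⟨max M 0, le_max_right _ _, fun t ht => (hM t (by simpa using ht)).trans (le_max_left _ _)⟩

end Growth
set_option linter.unusedSectionVars false

section Kernel

variable {ι : Type} [Fintype ι] [DecidableEq ι] {d : ℕ}

lemma Ki_branch {x : (ι → ℂ) × (Fin d → ℂ)} (i : ι) :
    Ki i (x, 1 / x.1 i) = -(2 / x.1 i) * gfun (Finset.univ.erase i) (x, 1 / x.1 i) := by
  simp [Ki, kint]

noncomputable def wi (e : ι → ℂ) (i : ι) (t : ℂ) : ℂ := ∏ j ∈ Finset.univ.erase i, rt (1 - e j * t)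

lemma wf_wi (e : ι → ℂ) (i : ι) (t : ℂ) : wf e t = rt (1 - e i * t) * wi e i t :=
  (Finset.mul_prod_erase Finset.univ _ (Finset.mem_univ i)).symm

lemma wi_ne {e : ι → ℂ} {i : ι} {t : ℂ} (ht : t ∈ Ws e i) : wi e i t ≠ 0 :=
  Finset.prod_ne_zero_iff.2 fun _ hj => rt_ne (Ws_slit ht (Finset.ne_of_mem_erase hj))

lemma wi_diff {e : ι → ℂ} {i : ι} {t : ℂ} (ht : t ∈ Ws e i) : DifferentiableAt ℂ (wi e i) t := by
  have : wi e i = fun t => ∏ j ∈ Finset.univ.erase i, rt (1 - e j * t) := rfl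
  rw [this]
  exact DifferentiableAt.fun_finsetProd fun j hj =>
    (rtlin_deriv (Ws_slit ht (Finset.ne_of_mem_erase hj))).differentiableAt

lemma log_le_sqrt {t R : ℝ} (hR : 1 ≤ R) (ht : R ≤ t) : Real.log (t / R) ≤ 2 * t ^ (1/2:ℝ) := by
  have h1 : 0 ≤ t / R := div_nonneg (by linarith) (by linarith)
  have h2 := Real.log_le_rpow_div h1 (ε := 1/2) (by norm_num)
  have h3 : (t / R) ^ (1/2:ℝ) ≤ t ^ (1/2:ℝ) :=
    Real.rpow_le_rpow h1 (div_le_self (by linarith) hR) (by norm_num)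
  calc _ ≤ _ := h2
    _ = 2 * (t / R) ^ (1/2:ℝ) := by ring
    _ ≤ _ := by linarith

lemma kernel_poly {x v : (ι → ℂ) × (Fin d → ℂ)} {c : ℂ} (he : Good x.1)
    (hcard : Fintype.card ι = 2 * d) (hv : ∀ i, - Kv i x v 0 = c) :
    ∃ p : ℂ[X], p.natDegree ≤ d ∧ (∀ t ∈ Om x.1, p.eval t = (Fv x v t - c) * wf x.1 t) ∧
      ∀ i, p.eval (1 / x.1 i) = v.1 i * Qe x.2 (1 / x.1 i) / x.1 i ^ 2 := by
  obtain ⟨T, hT, hT0, hTi⟩ := glue he (fun t => (Fv x v t - c) * wf x.1 t)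
    (fun i t => wi x.1 i t * (-(1/2) * v.1 i * t * Ki i (x, t) + (1 - x.1 i * t) * Kv i x v t))
    (fun t ht => (((Fv_deriv ht).differentiableAt.sub_const c).mul
      (wf_diff ht)).differentiableWithinAt)
    (fun i t ht => by
      obtain ⟨D, hD, -⟩ := Ki_deriv he ht
      have h1 := hD.differentiableAt
      have h2 := Kv_diff he ht v
      have h3 := wi_diff ht
      refine DifferentiableAt.differentiableWithinAt ?_
      refine h3.mul (DifferentiableAt.add (DifferentiableAt.mul (by fun_prop) h1)
        (DifferentiableAt.mul (by fun_prop) h2)))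
    (fun i t ht hO => by
      rw [Fv_eq he ht hO, hv i, wf_wi x.1 i]
      have hn := rt_ne (hO i)
      have hs := rt_sq (1 - x.1 i * t)
      rw [← hs] 
      rw [hs]
      field_simp
      rw [hs]
      ring)
  obtain ⟨R, a, C, hR, ha, hC, hl, hw1, hw2⟩ := w_bounds he.1 hcard
  obtain ⟨B, hB0, hB⟩ := fv_bound (v := v) he.1 hR ha hl hw1
  obtain ⟨M, hM0, hM⟩ := sphere_bd hT.continuous R
  obtain ⟨p, hp, hpT⟩ := poly_of_growth_Om (C := (M / a + B * 2) * C) he.1 hT d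
    (ρ := 1/2 + d) (R := R) (by positivity) (by linarith) (by linarith) (fun t ht htR => by
      obtain ⟨t0, ht0, hn0, hH⟩ := radial (e := x.1) (H := fun t => Fv x v t - c) (by linarith)
        (fun z hz => (Fv_deriv hz).sub_const c) hB ht htR
      have hpos : 0 < ‖t‖ := by linarith
      have h1 : ‖Fv x v t0 - c‖ ≤ M / a := by
        have h2 := hM t0 hn0
        rw [hT0 t0 ht0, norm_mul] at h2
        have h3 := hw1 t0 hn0.ge
        rw [hn0] at h3
        have h4 : 1 ≤ R ^ d := one_le_pow₀ hR
        rw [le_div_iff₀ ha]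
        have h5 := norm_nonneg (Fv x v t0 - c)
        have h6 : a ≤ ‖wf x.1 t0‖ := by nlinarith
        nlinarith
      have h2 : ‖Fv x v t - c‖ ≤ M / a + B * (2 * ‖t‖ ^ (1/2:ℝ)) := by
        have h3 : ‖Fv x v t - c‖ ≤ ‖Fv x v t0 - c‖ + ‖(Fv x v t - c) - (Fv x v t0 - c)‖ :=
          norm_le_norm_add_norm_sub' _ _
        have h4 := mul_le_mul_of_nonneg_left (log_le_sqrt hR htR) hB0
        linarith
      have h3 : 1 ≤ ‖t‖ ^ (1/2:ℝ) := Real.one_le_rpow (by linarith) (by norm_num)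
      have h4 : ‖Fv x v t - c‖ ≤ (M / a + B * 2) * ‖t‖ ^ (1/2:ℝ) := by
        have : 0 ≤ M / a := by positivity
        nlinarith
      rw [hT0 t ht, norm_mul, Real.rpow_add hpos, Real.rpow_natCast]
      have h5 := hw2 t htR
      calc _ ≤ ((M / a + B * 2) * ‖t‖ ^ (1/2:ℝ)) * (C * ‖t‖ ^ d) := by gcongr
        _ = _ := by ring)
  refine ⟨p, hp, fun t ht => by rw [← hpT, hT0 t ht], fun i => ?_⟩
  have h0 := he.1 i
  have hW : 1 / x.1 i ∈ Ws x.1 i := Ws_of_im he (by rw [mul_one_div, div_self h0]; simp)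
  have hn := wi_ne hW
  have hg : gfun (Finset.univ.erase i) (x, 1 / x.1 i) = Qe x.2 (1 / x.1 i) * (wi x.1 i (1 / x.1 i))⁻¹ := by
    simp [gfun, Qe, wi]
  rw [← hpT, hTi i _ hW, Ki_branch, hg]
  have h1 : 1 - x.1 i * (1 / x.1 i) = 0 := by field_simp; ring
  rw [h1, zero_mul, add_zero]
  field_simp

lemma Good.inj {e : ι → ℂ} (he : Good e) {i j : ι} (h : e i = e j) : i = j := by
  by_contra hij
  have := he.2 i j (Ne.symm hij)
  rw [h, div_self (he.1 j)] at this
  simp at this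

/-- the polynomial with coefficients `q` -/
noncomputable def Qp (q : Fin d → ℂ) : ℂ[X] := ∑ k : Fin d, C (q k) * X ^ (k:ℕ)

lemma Qp_eval (q : Fin d → ℂ) (z : ℂ) : (Qp q).eval z = Qe q z := by
  simp [Qp, Qe, eval_finsetSum]

lemma Qp_coeff (q : Fin d → ℂ) (k : Fin d) : (Qp q).coeff k = q k := by
  simp only [Qp, finsetSum_coeff, coeff_C_mul_X_pow]
  rw [Finset.sum_eq_single k]
  · simp
  · intro b _ hb
    rw [if_neg]
    intro h; exact hb (Fin.ext h.symm)
  · simp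

lemma Qp_ne {q : Fin d → ℂ} (hq : q ≠ 0) : Qp q ≠ 0 := by
  intro h
  apply hq
  funext k
  rw [← Qp_coeff q k, h]; simp

lemma Qp_deg (q : Fin d → ℂ) (hd : 0 < d) : (Qp q).natDegree < d := by
  have : (Qp q).natDegree ≤ d - 1 := by
    refine natDegree_sum_le_of_forall_le _ _ fun k _ => ?_
    exact (natDegree_C_mul_X_pow_le _ _).trans (by omega)
  omega

lemma Q_zero_of_Om {e : ι → ℂ} {q : Fin d → ℂ} (h : ∀ t ∈ Om e, Qe q t = 0) : q = 0 := by
  by_contra hq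
  have hz : (Qp q).rootSet ℂ ⊇ Om e := by
    intro t ht
    rw [mem_rootSet]
    exact ⟨Qp_ne hq, by simpa [Qp_eval] using h t ht⟩
  have hfin : (Om e).Finite := (rootSet_finite _ _).subset hz
  exact infinite_of_mem_nhds (0:ℂ) ((Om_open e).mem_nhds (Om_zero e)) hfin

lemma Om_infinite (e : ι → ℂ) : (Om e).Infinite :=
  infinite_of_mem_nhds (0:ℂ) ((Om_open e).mem_nhds (Om_zero e))

lemma one_div_inj_Om {e : ι → ℂ} (he : Good e) {t : ℂ} (ht : t ∈ Om e) (i : ι) : t ≠ 1 / e i := by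
  intro h
  have := ht i
  rw [h, mul_one_div, div_self (he.1 i)] at this
  simp at this

lemma kernel_inj {x v : (ι → ℂ) × (Fin d → ℂ)} {c : ℂ} (he : Good x.1)
    (hcard : Fintype.card ι = 2 * d) (hv : ∀ i, - Kv i x v 0 = c)
    (hI : ∀ i, Qe x.2 (1 / x.1 i) = 0 → v.1 i = 0) (tf : Finset ℂ) (htf : ↑tf ⊆ Om x.1)
    (htc : d + 1 ≤ tf.card + (Finset.univ.filter fun i => Qe x.2 (1 / x.1 i) = 0).card)
    (ht : ∀ t ∈ tf, Fv x v t - c = 0) : v = 0 ∧ c = 0 := by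
  classical
  obtain ⟨p, hpd, hpO, hpi⟩ := kernel_poly he hcard hv
  have hinj : Function.Injective fun i => 1 / x.1 i := by
    intro i j hij
    simp only [one_div, inv_inj] at hij
    exact he.inj hij
  have hp0 : p = 0 := by
    refine eq_zero_of_natDegree_lt_card_of_eval_eq_zero' p
      (tf ∪ (Finset.univ.filter fun i => Qe x.2 (1 / x.1 i) = 0).image fun i => 1 / x.1 i) ?_ ?_
    · intro t h
      rw [Finset.mem_union, Finset.mem_image] at h
      rcases h with h | ⟨i, hi, rfl⟩
      · rw [hpO t (htf h), ht t h, zero_mul]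
      · rw [hpi, (Finset.mem_filter.1 hi).2]; simp
    · rw [Finset.card_union_of_disjoint, Finset.card_image_of_injective _ hinj]
      · omega
      · rw [Finset.disjoint_left]
        intro t h1 h2
        obtain ⟨i, -, hi⟩ := Finset.mem_image.1 h2
        exact one_div_inj_Om he (htf h1) i hi.symm
  have hF : ∀ t ∈ Om x.1, Fv x v t = c := by
    intro t h
    have := hpO t h
    rw [hp0, eval_zero] at this
    have := (mul_eq_zero.1 this.symm).resolve_right (wf_ne h)
    exact sub_eq_zero.1 this
  have hv1 : v.1 = 0 := by
    funext i
    by_cases hQ : Qe x.2 (1 / x.1 i) = 0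
    · exact hI i hQ
    · have := hpi i
      rw [hp0, eval_zero] at this
      have h2 := (div_eq_zero_iff.1 this.symm).resolve_right (pow_ne_zero 2 (he.1 i))
      exact (mul_eq_zero.1 h2).resolve_right hQ
  have hv2 : v.2 = 0 := by
    refine Q_zero_of_Om (e := x.1) fun t h => ?_
    have h1 : HasDerivAt (Fv x v) 0 t := by
      refine (hasDerivAt_const t c).congr_of_eventuallyEq ?_
      filter_upwards [(Om_open x.1).mem_nhds h] with z hz using hF z hz
    have h2 := (Fv_deriv h (v := v)).unique h1
    rw [fv_eq h, hv1] at h2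
    simp only [Pi.zero_apply, zero_mul, zero_div, Finset.sum_const_zero, mul_zero, add_zero] at h2
    rw [gfun_wf] at h2
    exact (mul_eq_zero.1 h2).resolve_right (inv_ne_zero (wf_ne h))
  refine ⟨Prod.ext hv1 hv2, ?_⟩
  rw [← hF 0 (Om_zero _)]
  simp [Fv]

/-- the period map -/
noncomputable def Phi (y : ((ι → ℂ) × (Fin d → ℂ)) × ℂ) (i : ι) : ℂ := Pp i y.1 - y.2

lemma I_card {x : (ι → ℂ) × (Fin d → ℂ)} (he : Good x.1) (hq : x.2 ≠ 0) :
    (Finset.univ.filter fun i => Qe x.2 (1 / x.1 i) = 0).card < d := by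
  classical
  have hd : 0 < d := by
    rcases Nat.eq_zero_or_pos d with h | h
    · subst h; exact absurd (Subsingleton.elim _ _) hq
    · exact h
  have hinj : Function.Injective fun i => 1 / x.1 i := by
    intro i j hij
    simp only [one_div, inv_inj] at hij
    exact he.inj hij
  refine lt_of_le_of_lt ?_ (Qp_deg x.2 hd)
  rw [← Finset.card_image_of_injective _ hinj]
  refine card_le_degree_of_subset_roots ?_
  intro z hz
  obtain ⟨i, hi, rfl⟩ := Finset.mem_image.1 (Finset.mem_def.2 hz)
  rw [mem_roots (Qp_ne hq), IsRoot, Qp_eval]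
  exact (Finset.mem_filter.1 hi).2

lemma Phi_surj {x : (ι → ℂ) × (Fin d → ℂ)} {c : ℂ} (he : Good x.1) (hq : x.2 ≠ 0)
    (hcard : Fintype.card ι = 2 * d) :
    map (Phi (ι := ι) (d := d)) (𝓝 (x, c)) = 𝓝 (Phi (x, c)) := by
  choose L hL hLv using fun i => Pp_strict (x := x) he i
  set T : (((ι → ℂ) × (Fin d → ℂ)) × ℂ) →L[ℂ] (ι → ℂ) := ContinuousLinearMap.pi fun i =>
    (L i).comp (ContinuousLinearMap.fst ℂ _ _) - ContinuousLinearMap.snd ℂ _ _ with hT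
  have hTd : HasStrictFDerivAt (Phi (ι := ι) (d := d)) T (x, c) := by
    refine hasStrictFDerivAt_pi.2 fun i => ?_
    exact (HasStrictFDerivAt.comp (x, c) (f := Prod.fst) (hL i) hasStrictFDerivAt_fst).sub
      hasStrictFDerivAt_snd
  refine hTd.map_nhds_eq_of_surj ?_
  set I := Finset.univ.filter fun i => Qe x.2 (1 / x.1 i) = 0 with hI
  have hIc : I.card < d := I_card he hq
  obtain ⟨tf, htf, htc⟩ := (Om_infinite x.1).exists_subset_card_eq (d + 1 - I.card)
  choose! LF hLF using fun t (ht : t ∈ Om x.1) => Fi_fderiv (x := x) ht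
  let Ψ : (((ι → ℂ) × (Fin d → ℂ)) × ℂ) →ₗ[ℂ] (I → ℂ) × (tf → ℂ) :=
    LinearMap.prod
      (LinearMap.pi fun i => (LinearMap.proj (i:ι)).comp
        ((LinearMap.fst ℂ _ _).comp (LinearMap.fst ℂ _ _)))
      (LinearMap.pi fun t => (LF (t:ℂ)).toLinearMap.comp (LinearMap.fst ℂ _ _) - LinearMap.snd ℂ _ _)
  have hker : ∀ y, T y = 0 → Ψ y = 0 → y = 0 := by
    intro y h1 h2
    have hy : ∀ i, - Kv i x y.1 0 = y.2 := by
      intro i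
      have := congrFun h1 i
      simp only [hT, ContinuousLinearMap.coe_pi', Pi.zero_apply, sub_apply,
        ContinuousLinearMap.comp_apply, ContinuousLinearMap.coe_fst', ContinuousLinearMap.coe_snd',
        hLv] at this
      exact sub_eq_zero.1 this
    have hp := Prod.ext_iff.1 h2
    obtain ⟨h3, h4⟩ := kernel_inj he hcard hy (fun i hi => by
        exact congrFun hp.1 ⟨i, Finset.mem_filter.2 ⟨Finset.mem_univ i, hi⟩⟩) tf htf (by rw [← hI]; omega) (fun t ht => by
        have := congrFun hp.2 ⟨t, ht⟩
        rw [← (hLF t (htf ht)).2]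
        exact this)
    exact Prod.ext h3 h4
  have hfin : Module.finrank ℂ (LinearMap.ker T.toLinearMap) ≤ d + 1 := by
    have h1 : Function.Injective (Ψ.comp (LinearMap.ker T.toLinearMap).subtype) := by
      rw [← LinearMap.ker_eq_bot, LinearMap.ker_eq_bot']
      intro y hy
      exact Subtype.ext (hker y.1 y.2 hy)
    have h2 := LinearMap.finrank_le_finrank_of_injective h1
    rw [Module.finrank_prod, Module.finrank_fintype_fun_eq_card,
      Module.finrank_fintype_fun_eq_card, Fintype.card_coe, Fintype.card_coe] at h2
    omega
  have hrn := LinearMap.finrank_range_add_finrank_ker T.toLinearMap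
  rw [Module.finrank_prod, Module.finrank_prod, Module.finrank_fintype_fun_eq_card,
    Module.finrank_fintype_fun_eq_card, Module.finrank_self, Fintype.card_fin, hcard] at hrn
  apply Submodule.eq_top_of_finrank_eq
  have h5 := Submodule.finrank_le (LinearMap.range T.toLinearMap)
  rw [Module.finrank_fintype_fun_eq_card, hcard] at *
  omega

end Kernel
set_option linter.unusedSectionVars false

section Pell

variable {ι : Type} [Fintype ι] [DecidableEq ι] {d : ℕ}

lemma cosh_upper (z : ℂ) : ‖Complex.cosh z‖ ≤ Real.exp |z.re| := by
  rw [Complex.cosh, norm_div, Complex.norm_ofNat, div_le_iff₀ two_pos]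
  refine (norm_add_le _ _).trans ?_
  rw [Complex.norm_exp, Complex.norm_exp, Complex.neg_re]
  have h1 := Real.exp_le_exp.2 (le_abs_self z.re)
  have h2 := Real.exp_le_exp.2 (neg_le_abs z.re)
  linarith

lemma sinh_upper (z : ℂ) : ‖Complex.sinh z‖ ≤ Real.exp |z.re| := by
  rw [Complex.sinh, norm_div, Complex.norm_ofNat, div_le_iff₀ two_pos]
  refine (norm_sub_le _ _).trans ?_
  rw [Complex.norm_exp, Complex.norm_exp, Complex.neg_re]
  have h1 := Real.exp_le_exp.2 (le_abs_self z.re)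
  have h2 := Real.exp_le_exp.2 (neg_le_abs z.re)
  linarith

lemma cosh_lower (z : ℂ) : |z.re| ≤ 2 * ‖Complex.cosh z‖ := by
  have h0 : Complex.exp z + Complex.exp (-z) = 2 * Complex.cosh z := by
    rw [Complex.cosh]; ring
  have h1 : ‖Complex.exp z‖ - ‖Complex.exp (-z)‖ ≤ ‖Complex.exp z + Complex.exp (-z)‖ := by
    have := norm_sub_norm_le (Complex.exp z) (-Complex.exp (-z))
    rwa [norm_neg, sub_neg_eq_add] at this
  have h2 : ‖Complex.exp (-z)‖ - ‖Complex.exp z‖ ≤ ‖Complex.exp z + Complex.exp (-z)‖ := by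
    have := norm_sub_norm_le (Complex.exp (-z)) (-Complex.exp z)
    rwa [norm_neg, sub_neg_eq_add, add_comm (Complex.exp (-z))] at this
  rw [h0, norm_mul, Complex.norm_ofNat, Complex.norm_exp, Complex.norm_exp, Complex.neg_re] at h1 h2
  rcases le_total 0 z.re with h | h
  · rw [abs_of_nonneg h]
    have h3 := Real.add_one_le_exp z.re
    have h4 : Real.exp (-z.re) ≤ 1 := Real.exp_le_one_iff.2 (by linarith)
    linarith
  · rw [abs_of_nonpos h]
    have h3 := Real.add_one_le_exp (-z.re)
    have h4 : Real.exp (z.re) ≤ 1 := Real.exp_le_one_iff.2 (by linarith)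
    linarith

lemma sinh_int (m : ℤ) : Complex.sinh ((m:ℂ) * Real.pi * Complex.I) = 0 := by
  rw [Complex.sinh_mul_I, Complex.sin_int_mul_pi, zero_mul]

lemma pell_of_periods {x : (ι → ℂ) × (Fin d → ℂ)} {c : ℂ} (he : Good x.1) (hq : x.2 ≠ 0)
    (hcard : Fintype.card ι = 2 * d) {N : ℕ} (hN : N ≠ 0) (m : ι → ℤ)
    (hm : ∀ i, (N:ℂ) * (Pp i x - c) = (m i : ℂ) * Real.pi * Complex.I) :
    ∃ A B : ℂ[X], B ≠ 0 ∧ A ^ 2 - (∏ j, (1 - C (x.1 j) * X)) * B ^ 2 = 1 := by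
  obtain ⟨Cc, Ss, hCc, hSs, hC1, hS1⟩ := cosh_sinh_factor
  set H : ℂ → ℂ := fun t => N * (Fi (x, t) - c) with hH
  have hHd : ∀ t ∈ Om x.1, HasDerivAt H (N * gfun Finset.univ (x, t)) t := fun t ht =>
    ((Fi_deriv ht).sub_const c).const_mul _
  set σ : ι → ℂ := fun i => Complex.cosh ((m i : ℂ) * Real.pi * Complex.I) with hσ
  set U : ι → ℂ → ℂ := fun i t => N * Ki i (x, t) with hU
  have hUd : ∀ i, ∀ t ∈ Ws x.1 i, DifferentiableAt ℂ (U i) t := by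
    intro i t ht
    obtain ⟨D, hD, -⟩ := Ki_deriv he ht
    exact (hD.const_mul (N:ℂ)).differentiableAt
  have hHU : ∀ i, ∀ t ∈ Ws x.1 i, t ∈ Om x.1 →
      H t = rt (1 - x.1 i * t) * U i t + (m i : ℂ) * Real.pi * Complex.I := by
    intro i t ht hO
    rw [← hm i]
    simp only [hH, hU]
    rw [Fi_eq he ht hO]
    ring
  have hcH : ∀ i, ∀ t ∈ Ws x.1 i, t ∈ Om x.1 →
      Complex.cosh (H t) = σ i * Complex.cosh (rt (1 - x.1 i * t) * U i t) := by
    intro i t ht hO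
    rw [hHU i t ht hO, Complex.cosh_add, sinh_int]
    ring
  have hsH : ∀ i, ∀ t ∈ Ws x.1 i, t ∈ Om x.1 →
      Complex.sinh (H t) = σ i * Complex.sinh (rt (1 - x.1 i * t) * U i t) := by
    intro i t ht hO
    rw [hHU i t ht hO, Complex.sinh_add, sinh_int]
    ring
  have hsq : ∀ i t, (1 - x.1 i * t) * U i t ^ 2 = (rt (1 - x.1 i * t) * U i t) ^ 2 := by
    intro i t
    rw [mul_pow (rt _), rt_sq]
  obtain ⟨A, hA, hA0, -⟩ := glue he (fun t => Complex.cosh (H t))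
    (fun i t => σ i * Cc ((1 - x.1 i * t) * U i t ^ 2))
    (fun t ht => (hHd t ht).differentiableAt.ccosh.differentiableWithinAt)
    (fun i t ht => by
      have h1 := hUd i t ht
      have h2 : DifferentiableAt ℂ (fun t => (1 - x.1 i * t) * U i t ^ 2) t :=
        DifferentiableAt.mul (by fun_prop) (h1.pow 2)
      exact ((hCc.differentiableAt.comp t h2).const_mul _).differentiableWithinAt)
    (fun i t ht hO => by rw [hcH i t ht hO, hsq, hC1])
  obtain ⟨B, hB, hB0, -⟩ := glue he (fun t => Complex.sinh (H t) / wf x.1 t)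
    (fun i t => σ i * U i t * Ss ((1 - x.1 i * t) * U i t ^ 2) / wi x.1 i t)
    (fun t ht => ((hHd t ht).differentiableAt.csinh.div (wf_diff ht)
      (wf_ne ht)).differentiableWithinAt)
    (fun i t ht => by
      have h1 := hUd i t ht
      have h2 : DifferentiableAt ℂ (fun t => (1 - x.1 i * t) * U i t ^ 2) t :=
        DifferentiableAt.mul (by fun_prop) (h1.pow 2)
      exact ((((h1.const_mul _).mul (hSs.differentiableAt.comp t h2))).div (wi_diff ht)
        (wi_ne ht)).differentiableWithinAt)
    (fun i t ht hO => by
      rw [hsH i t ht hO, hsq, ← hS1, wf_wi x.1 i]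
      have := rt_ne (hO i)
      have := wi_ne ht
      field_simp)
  obtain ⟨R, a, b, hR, ha, hb, hl, hw1, hw2⟩ := w_bounds he.1 hcard
  obtain ⟨M, hM0, hM⟩ := sphere_bd hA.continuous R
  set K : ℝ := N * ((∑ k, ‖x.2 k‖) / a) with hK
  have hK0 : 0 ≤ K := by positivity
  have hre : ∀ t ∈ Om x.1, R ≤ ‖t‖ → Real.exp |(H t).re| ≤ Real.exp (2 * M) * ‖t‖ ^ K := by
    intro t ht htR
    obtain ⟨t0, ht0, hn0, hd0⟩ := radial (e := x.1) (C := K) (R := R) (by linarith) hHd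
      (fun z hz hzR => by
        rw [norm_mul, Complex.norm_natCast, mul_assoc]
        exact mul_le_mul_of_nonneg_left (g_bound (e := x.1) x.2 hR ha hw1 hzR) (by positivity)) ht htR
    have h1 : |(H t0).re| ≤ 2 * M := by
      have h2 := hM t0 hn0
      rw [hA0 t0 ht0] at h2
      have := cosh_lower (H t0)
      linarith
    have h2 : |(H t).re - (H t0).re| ≤ K * Real.log (‖t‖ / R) := by
      rw [← Complex.sub_re]
      exact (Complex.abs_re_le_norm _).trans hd0
    have h3 : |(H t).re| ≤ |(H t0).re| + |(H t).re - (H t0).re| := by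
      have := abs_add_le (H t0).re ((H t).re - (H t0).re)
      simpa using this
    have hpos : 0 < ‖t‖ := by linarith
    have h4 : Real.log (‖t‖ / R) ≤ Real.log ‖t‖ :=
      Real.log_le_log (by positivity) (div_le_self hpos.le hR)
    have h5 := mul_le_mul_of_nonneg_left h4 hK0
    rw [Real.rpow_def_of_pos hpos, ← Real.exp_add]
    apply Real.exp_le_exp.2
    linarith
  obtain ⟨p, -, hp⟩ := poly_of_growth_Om (C := Real.exp (2 * M)) (R := R) he.1 hA ⌈K⌉₊ hK0
    (by have := Nat.le_ceil K; linarith) (by linarith) (fun t ht htR => by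
      rw [hA0 t ht]; exact (cosh_upper _).trans (hre t ht htR))
  obtain ⟨r, -, hr⟩ := poly_of_growth_Om (C := Real.exp (2 * M) / a) (R := R) he.1 hB ⌈K⌉₊ hK0
    (by have := Nat.le_ceil K; linarith) (by linarith) (fun t ht htR => by
      have h1 := (sinh_upper _).trans (hre t ht htR)
      have h2 := hw1 t htR
      have h3 : 1 ≤ ‖t‖ ^ d := one_le_pow₀ (hR.trans htR)
      have h4 : a ≤ ‖wf x.1 t‖ := by nlinarith
      rw [hB0 t ht, norm_div, div_mul_eq_mul_div]
      exact div_le_div₀ (by positivity) h1 ha h4)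
  refine ⟨p, r, ?_, ?_⟩
  · rintro rfl
    apply hq
    have hs0 : ∀ t ∈ Om x.1, Complex.sinh (H t) = 0 := by
      intro t ht
      have h1 := hB0 t ht
      rw [hr, eval_zero] at h1
      exact (div_eq_zero_iff.1 h1.symm).resolve_right (wf_ne ht)
    refine Q_zero_of_Om (e := x.1) fun t ht => ?_
    have h1 : HasDerivAt (fun t => Complex.sinh (H t)) 0 t := by
      refine (hasDerivAt_const t (0:ℂ)).congr_of_eventuallyEq ?_
      filter_upwards [(Om_open x.1).mem_nhds ht] with z hz using hs0 z hz
    have h2 := (hHd t ht).csinh.unique h1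
    have h3 : Complex.cosh (H t) ≠ 0 := by
      intro h
      have := Complex.cosh_sq_sub_sinh_sq (H t)
      rw [hs0 t ht, h] at this
      norm_num at this
    have hN' : (N:ℂ) ≠ 0 := by exact_mod_cast hN
    have h4 := (mul_eq_zero.1 ((mul_eq_zero.1 h2).resolve_left h3)).resolve_left hN'
    rw [gfun_wf] at h4
    exact (mul_eq_zero.1 h4).resolve_right (inv_ne_zero (wf_ne ht))
  · refine eq_of_infinite_eval_eq _ _ ((Om_infinite x.1).mono fun t ht => ?_)
    show eval t _ = eval t _
    simp only [eval_sub, eval_pow, eval_mul, eval_prod, eval_one, eval_C, eval_X]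
    rw [← wf_sq, ← hp, ← hr, hA0 t ht, hB0 t ht]
    have := wf_ne ht
    have h1 := Complex.cosh_sq_sub_sinh_sq (H t)
    rw [div_pow, mul_div_cancel₀ _ (pow_ne_zero 2 this)]
    exact h1

lemma pell_translate {e : ι → ℂ} (he : ∀ i, e i ≠ 0) (b : ℂ) 
    (h : ∃ A B : ℂ[X], B ≠ 0 ∧ A ^ 2 - (∏ j, (1 - C (e j) * X)) * B ^ 2 = 1) :
    Pellian (∏ j, (X - C (b + 1 / e j))) := by
  obtain ⟨A, B, hB, hAB⟩ := h
  set κ : ℂ := ∏ j, (- e j) with hκ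
  have hκ0 : κ ≠ 0 := Finset.prod_ne_zero_iff.2 fun j _ => neg_ne_zero.2 (he j)
  have hfac : (∏ j, (1 - C (e j) * X)).comp (X - C b) = C (rt κ) ^ 2 * ∏ j, (X - C (b + 1 / e j)) := by
    rw [← C_pow, rt_sq, hκ, map_prod, ← Finset.prod_mul_distrib, prod_comp]
    refine Finset.prod_congr rfl fun j _ => ?_
    simp only [sub_comp, one_comp, mul_comp, C_comp, X_comp, C_add, C_neg]
    have h1 : C (e j) * C (1 / e j) = (1 : ℂ[X]) := by
      rw [← C_mul, mul_one_div, div_self (he j), C_1]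
    linear_combination (-1 : ℂ[X]) * h1
  have hrt : rt κ ≠ 0 := by
    intro h0
    have := rt_sq κ
    rw [h0] at this
    exact hκ0 (by simpa using this.symm)
  refine ⟨A.comp (X - C b), C (rt κ) * B.comp (X - C b), ?_, ?_⟩
  · refine mul_ne_zero (C_ne_zero.2 hrt) fun h0 => hB ?_
    have := congrArg (fun p : ℂ[X] => p.comp (X + C b)) h0
    simpa [comp_assoc] using this
  · have := congrArg (fun p : ℂ[X] => p.comp (X - C b)) hAB
    simp only [sub_comp, pow_comp, mul_comp, one_comp] at this hfac
    rw [hfac] at this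
    rw [← this]
    ring

end Pell
set_option linter.unusedSectionVars false

section Main

variable {ι : Type} [Fintype ι] [DecidableEq ι] {d : ℕ}

lemma kint_sum (i : ι) (e : ι → ℂ) (q : Fin d → ℂ) (t u : ℂ) :
    kint i (((e, q), t), u) = ∑ k, q k * kint i (((e, Pi.single k 1), t), u) := by
  have h : ∀ (z : ℂ) (k : Fin d), ∑ l : Fin d, (Pi.single k 1 : Fin d → ℂ) l * z ^ (l:ℕ) = z ^ (k:ℕ) := by
    intro z k
    simp [Pi.single_apply]
  simp only [kint, gfun, h, Finset.sum_mul, Finset.mul_sum]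
  exact Finset.sum_congr rfl fun k _ => by ring

lemma Pp_lin {e : ι → ℂ} (he : Good e) (i : ι) (q : Fin d → ℂ) :
    Pp i (e, q) = ∑ k, q k * Pp i (e, Pi.single k 1) := by
  simp only [Pp, Ki, kint_sum i e q]
  rw [intervalIntegral.integral_finsetSum]
  · simp only [intervalIntegral.integral_const_mul, mul_neg, Finset.sum_neg_distrib]
  · intro k _
    refine IntervalIntegrable.const_mul ?_ _
    refine ContinuousOn.intervalIntegrable fun u hu => ?_
    rw [uIcc_of_le zero_le_one] at hu
    have h1 := (kint_an (x := (e, (Pi.single k 1 : Fin d → ℂ))) he (Ws_zero he i) hu).continuousAt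
    exact (ContinuousAt.comp (f := fun u : ℝ => (((e, (Pi.single k 1 : Fin d → ℂ)), (0:ℂ)), (u:ℂ)))
      h1 (by fun_prop)).continuousWithinAt

lemma exists_imag (i0 : ι) {e : ι → ℂ} (he : Good e) (hcard : Fintype.card ι = 2 * d) :
    ∃ (q : Fin d → ℂ) (c : ℝ), q ≠ 0 ∧ ∀ i, (Pp i (e, q) - c).re = 0 := by
  let T : ((Fin d → ℂ) × ℝ) →ₗ[ℝ] (ι → ℝ) :=
    { toFun := fun y i => (∑ k, y.1 k * Pp i (e, Pi.single k 1)).re - y.2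
      map_add' := by
        intro y z
        funext i
        simp only [Prod.fst_add, Pi.add_apply, add_mul, Finset.sum_add_distrib, Complex.add_re,
          Prod.snd_add]
        ring
      map_smul' := by
        intro r y
        funext i
        simp only [Prod.smul_fst, Pi.smul_apply, Complex.real_smul, mul_assoc, ← Finset.mul_sum,
          Complex.re_ofReal_mul, Prod.smul_snd, smul_eq_mul, RingHom.id_apply]
        ring }
  have hne : LinearMap.ker T ≠ ⊥ := by
    apply LinearMap.ker_ne_bot_of_finrank_lt
    rw [Module.finrank_prod, Module.finrank_fintype_fun_eq_card, Module.finrank_pi_fintype]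
    simp [Complex.finrank_real_complex, hcard]
    omega
  obtain ⟨y, hy, hy0⟩ := Submodule.exists_mem_ne_zero_of_ne_bot hne
  have hy' : ∀ i, (∑ k, y.1 k * Pp i (e, Pi.single k 1)).re - y.2 = 0 := fun i =>
    congrFun (LinearMap.mem_ker.1 hy) i
  refine ⟨y.1, y.2, ?_, fun i => ?_⟩
  · intro h
    apply hy0
    have := hy' i0
    simp [h] at this
    exact Prod.ext h this
  · rw [Pp_lin he, Complex.sub_re, Complex.ofReal_re]
    exact hy' i

lemma floor_lim (r : ℝ) : Tendsto (fun N : ℕ => ((⌊r * N⌋ : ℝ) / N : ℝ)) atTop (𝓝 r) := by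
  have h0 : Tendsto (fun N : ℕ => r - 1 / (N:ℝ)) atTop (𝓝 r) := by
    simpa using (tendsto_one_div_atTop_nhds_zero_nat (𝕜 := ℝ)).const_sub r
  refine tendsto_of_tendsto_of_tendsto_of_le_of_le' h0 tendsto_const_nhds ?_ ?_
  · filter_upwards [eventually_gt_atTop 0] with N hN
    have hN' : (0:ℝ) < N := by exact_mod_cast hN
    rw [le_div_iff₀ hN', sub_mul, one_div, inv_mul_cancel₀ hN'.ne']
    exact (Int.sub_one_lt_floor _).le
  · filter_upwards [eventually_gt_atTop 0] with N hN
    have hN' : (0:ℝ) < N := by exact_mod_cast hN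
    rw [div_le_iff₀ hN']
    exact Int.floor_le _

lemma rat_freq (y : ι → ℂ) (hy : ∀ i, (y i).re = 0) :
    ∃ᶠ z in 𝓝 y, ∃ N : ℕ, N ≠ 0 ∧ ∃ m : ι → ℤ, ∀ i, (N:ℂ) * z i = (m i : ℂ) * Real.pi * Complex.I := by
  set r : ι → ℝ := fun i => (y i).im / Real.pi with hr
  have hlim : Tendsto (fun (N : ℕ) (i : ι) => (((⌊r i * N⌋ : ℝ) / N : ℝ) : ℂ) * Real.pi * Complex.I)
      atTop (𝓝 y) := by
    rw [tendsto_pi_nhds]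
    intro i
    have h1 : Tendsto (fun N : ℕ => ((⌊r i * N⌋ : ℝ) / N : ℝ)) atTop (𝓝 (r i)) :=
      floor_lim (r i)
    have h2 : Continuous fun s : ℝ => (s:ℂ) * Real.pi * Complex.I := by fun_prop
    have h3 := (h2.tendsto (r i)).comp h1
    have h4 : ((r i : ℝ) : ℂ) * Real.pi * Complex.I = y i := by
      rw [← Complex.ofReal_mul, hr]
      simp only
      rw [div_mul_cancel₀ _ Real.pi_ne_zero]
      apply Complex.ext <;> simp [hy i]
    rw [h4] at h3
    exact h3
  refine hlim.frequently (Eventually.frequently ?_)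
  filter_upwards [eventually_ne_atTop 0] with N hN
  refine ⟨N, hN, fun i => ⌊r i * N⌋, fun i => ?_⟩
  have : (N:ℂ) ≠ 0 := by exact_mod_cast hN
  push_cast
  field_simp

lemma coeff_cont (s : Finset ι) (n : ℕ) :
    Continuous fun r : ι → ℂ => (∏ j ∈ s, (X - C (r j))).coeff n := by
  induction s using Finset.induction_on generalizing n with
  | empty => simpa using continuous_const
  | insert a s ha ih =>
    simp only [Finset.prod_insert ha, coeff_mul]
    refine continuous_finsetSum _ fun k _ => Continuous.mul ?_ (ih _)
    simp only [coeff_sub, coeff_C]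
    refine continuous_const.sub ?_
    split_ifs
    · fun_prop
    · exact continuous_const

/-- tuple of coefficients -/
noncomputable def cf (d : ℕ) (P : ℂ[X]) (i : Fin (2 * d)) : ℂ := P.coeff (2 * d - 1 - i)

lemma Dpoly_cf {P : ℂ[X]} (hP : P.Monic) (hdeg : P.natDegree = 2 * d) : Dpoly d (cf d P) = P := by
  conv_rhs => rw [P.as_sum_range_C_mul_X_pow, hdeg, Finset.sum_range_succ,
    ← Finset.sum_range_reflect, Finset.sum_range]
  have : P.coeff (2 * d) = 1 := by rw [← hdeg]; exact hP
  rw [this, C_1, one_mul, add_comm, Dpoly]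
  simp only [cf]

lemma Dlow_deg (s : Fin (2 * d) → ℂ) :
    (∑ i : Fin (2*d), C (s i) * X ^ (2*d - 1 - (i : ℕ)) : ℂ[X]).degree < ((2 * d : ℕ) : WithBot ℕ) := by
  rw [degree_lt_iff_coeff_zero]
  intro m hm
  rw [finsetSum_coeff]
  refine Finset.sum_eq_zero fun i _ => ?_
  rw [coeff_C_mul_X_pow, if_neg]
  have := i.2
  omega

lemma Dpoly_monic (s : Fin (2 * d) → ℂ) : (Dpoly d s).Monic := monic_X_pow_add (Dlow_deg s)

lemma Dpoly_deg (s : Fin (2 * d) → ℂ) : (Dpoly d s).natDegree = 2 * d := by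
  have := degree_add_eq_left_of_degree_lt (p := X ^ (2 * d)) (q := ∑ i : Fin (2*d), C (s i) * X ^ (2*d - 1 - (i : ℕ)))
    (by rw [degree_X_pow]; exact Dlow_deg s)
  rw [degree_X_pow] at this
  exact natDegree_eq_of_degree_eq_some this

lemma cf_Dpoly (s : Fin (2 * d) → ℂ) : cf d (Dpoly d s) = s := by
  funext i
  have hi := i.2
  rw [cf, Dpoly, coeff_add, coeff_X_pow, if_neg (by omega), zero_add, finsetSum_coeff,
    Finset.sum_eq_single i]
  · simp
  · intro j _ hj
    have := j.2
    rw [coeff_C_mul_X_pow, if_neg]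
    intro h
    exact hj (Fin.ext (by omega))
  · simp

lemma choose_base (a : ι → ℂ) (ha : Function.Injective a) :
    ∃ b : ℂ, ∀ i j, j ≠ i → ((a j - b) * (starRingEnd ℂ) (a i - b)).im ≠ 0 := by
  have hd : ∀ i j, j ≠ i → Dense {b : ℂ | ((a j - b) * (starRingEnd ℂ) (a i - b)).im ≠ 0} := by
    intro i j hj b
    by_cases hb : ((a j - b) * (starRingEnd ℂ) (a i - b)).im = 0
    · have h1 : Tendsto (fun s : ℝ => b + (s:ℂ) * (Complex.I * (a j - a i))) (𝓝[≠] 0) (𝓝 b) := by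
        have : Continuous (fun s : ℝ => b + (s:ℂ) * (Complex.I * (a j - a i))) := by fun_prop
        have h := this.tendsto 0
        simp only [Complex.ofReal_zero, zero_mul, add_zero] at h
        exact h.mono_left nhdsWithin_le_nhds
      refine mem_closure_of_tendsto h1 ?_
      filter_upwards [self_mem_nhdsWithin] with s hs
      show ((a j - _) * (starRingEnd ℂ) (a i - _)).im ≠ 0
      have hn : Complex.normSq (a j - a i) ≠ 0 := by
        rw [Ne, Complex.normSq_eq_zero, sub_eq_zero]
        exact fun h => hj (ha h)
      have hs' : s ≠ 0 := hs
      have : ((a j - (b + (s:ℂ) * (Complex.I * (a j - a i)))) *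
          (starRingEnd ℂ) (a i - (b + (s:ℂ) * (Complex.I * (a j - a i))))).im =
          ((a j - b) * (starRingEnd ℂ) (a i - b)).im + s * Complex.normSq (a j - a i) := by
        simp [Complex.normSq_apply]
        ring
      rw [this, hb, zero_add]
      exact mul_ne_zero hs' hn
    · exact subset_closure hb
  have ho : ∀ i j, IsOpen {b : ℂ | ((a j - b) * (starRingEnd ℂ) (a i - b)).im ≠ 0} := by
    intro i j
    refine isOpen_ne_fun ?_ continuous_const
    exact Complex.continuous_im.comp ((continuous_const.sub continuous_id).mul
      (Complex.continuous_conj.comp (continuous_const.sub continuous_id)))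
  have hD : Dense (⋂ p : {p : ι × ι // p.2 ≠ p.1},
      {b : ℂ | ((a p.1.2 - b) * (starRingEnd ℂ) (a p.1.1 - b)).im ≠ 0}) :=
    dense_iInter_of_isOpen (fun p => ho _ _) fun p => hd _ _ p.2
  obtain ⟨b, hb⟩ := hD.nonempty
  refine ⟨b, fun i j hj => ?_⟩
  exact mem_iInter.1 hb ⟨(i, j), hj⟩

lemma div_im_ne {z w : ℂ} (h : (z * (starRingEnd ℂ) w).im ≠ 0) : w ≠ 0 ∧ (z / w).im ≠ 0 := by
  have hw : w ≠ 0 := by rintro rfl; simp at h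
  refine ⟨hw, fun h0 => h ?_⟩
  have h1 : z * (starRingEnd ℂ) w = (z / w) * (Complex.normSq w : ℂ) := by
    rw [← Complex.mul_conj]; field_simp
  rw [h1, Complex.im_mul_ofReal, h0, zero_mul]

lemma main_aux (hd : 1 ≤ d) (hcard : Fintype.card ι = 2 * d) (a : ι → ℂ) (ha : Function.Injective a) :
    cf d (∏ j, (X - C (a j))) ∈
      closure {s' : Fin (2*d) → ℂ | Squarefree (Dpoly d s') ∧ Pellian (Dpoly d s')} := by
  obtain ⟨b, hb⟩ := choose_base a ha
  have hnt : Nontrivial ι := Fintype.one_lt_card_iff_nontrivial.1 (by omega)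
  have hab : ∀ i, a i - b ≠ 0 := by
    intro i
    obtain ⟨j, hj⟩ := exists_ne i
    exact (div_im_ne (hb i j hj)).1
  set e : ι → ℂ := fun i => 1 / (a i - b) with he
  have hG : Good e := by
    refine ⟨fun i => one_div_ne_zero (hab i), fun i j hj => ?_⟩
    have : e i / e j = (a j - b) / (a i - b) := by
      simp only [he]
      have := hab i
      have := hab j
      field_simp
    rw [this]
    exact (div_im_ne (hb i j hj)).2
  obtain ⟨q, c, hq, hre⟩ := exists_imag (Classical.arbitrary ι) hG hcard
  have hmap := Phi_surj (x := (e, q)) (c := (c:ℂ)) hG hq hcard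
  have hfreq := rat_freq (Phi ((e, q), (c:ℂ))) hre
  rw [← hmap, frequently_map] at hfreq
  have hcf1 : Tendsto (fun y : ((ι → ℂ) × (Fin d → ℂ)) × ℂ => y.1.1) (𝓝 ((e, q), (c:ℂ))) (𝓝 e) := by
    have : Continuous (fun y : ((ι → ℂ) × (Fin d → ℂ)) × ℂ => y.1.1) := by fun_prop
    exact this.tendsto ((e, q), (c:ℂ))
  have hcf2 : Tendsto (fun y : ((ι → ℂ) × (Fin d → ℂ)) × ℂ => y.1.2) (𝓝 ((e, q), (c:ℂ))) (𝓝 q) := by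
    have : Continuous (fun y : ((ι → ℂ) × (Fin d → ℂ)) × ℂ => y.1.2) := by fun_prop
    exact this.tendsto ((e, q), (c:ℂ))
  have hlim : Tendsto (fun y : ((ι → ℂ) × (Fin d → ℂ)) × ℂ =>
      cf d (∏ j, (X - C (b + 1 / y.1.1 j)))) (𝓝 ((e, q), (c:ℂ))) (𝓝 (cf d (∏ j, (X - C (a j))))) := by
    have h1 : Tendsto (fun y : ((ι → ℂ) × (Fin d → ℂ)) × ℂ => fun j => b + 1 / y.1.1 j)
        (𝓝 ((e, q), (c:ℂ))) (𝓝 a) := by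
      rw [tendsto_pi_nhds]
      intro j
      have h2 : Tendsto (fun y : ((ι → ℂ) × (Fin d → ℂ)) × ℂ => y.1.1 j) (𝓝 ((e, q), (c:ℂ)))
        (𝓝 (e j)) := ((continuous_apply j).tendsto e).comp hcf1
      have h3 := ((tendsto_const_nhds (x := (1:ℂ))).div h2 (hG.1 j)).const_add b
      have h4 : b + 1 / e j = a j := by simp [he]
      rw [h4] at h3
      exact h3
    rw [tendsto_pi_nhds]
    intro i
    exact ((coeff_cont (ι := ι) Finset.univ (2 * d - 1 - i)).tendsto a).comp h1
  rw [mem_closure_iff_frequently]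
  refine hlim.frequently ?_
  refine (hfreq.and_eventually ((hcf1.eventually (Good_open hG)).and
    (hcf2.eventually_ne hq))).mono ?_
  rintro y ⟨⟨N, hN, m, hm⟩, hyG, hyq⟩
  have hD : Dpoly d (cf d (∏ j, (X - C (b + 1 / y.1.1 j)))) = ∏ j, (X - C (b + 1 / y.1.1 j)) :=
    Dpoly_cf (monic_prod_of_monic _ _ fun j _ => monic_X_sub_C _) (by
      rw [natDegree_prod_of_monic _ _ fun j _ => monic_X_sub_C _]
      simp only [natDegree_X_sub_C]
      simp [hcard])
  show Squarefree (Dpoly d _) ∧ Pellian (Dpoly d _)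
  rw [hD]
  refine ⟨?_, pell_translate hyG.1 b (pell_of_periods hyG hyq hcard hN m hm)⟩
  refine Separable.squarefree (separable_prod_X_sub_C_iff.2 fun i j hij => ?_)
  simp only [add_right_inj, one_div, inv_inj] at hij
  exact hyG.inj hij

end Main

theorem stmt0 (d : ℕ) (hd : 2 ≤ d) (s : Fin (2*d) → ℂ) (hs : Squarefree (Dpoly d s)) :
    s ∈ closure {s' : Fin (2*d) → ℂ | Squarefree (Dpoly d s') ∧ Pellian (Dpoly d s')} := by
  classical
  have hm := Dpoly_monic s
  have hsp : (Dpoly d s).Splits := IsAlgClosed.splits _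
  have hnd : (Dpoly d s).roots.Nodup := nodup_roots (PerfectField.separable_iff_squarefree.2 hs)
  have hc : Multiset.card (Dpoly d s).roots = 2 * d := by
    rw [← hsp.natDegree_eq_card_roots, Dpoly_deg]
  have hprod : ∏ j : (Dpoly d s).roots.toFinset, (X - C (j : ℂ)) = Dpoly d s := by
    rw [Finset.prod_coe_sort (Dpoly d s).roots.toFinset (fun j => X - C j)]
    have h1 : (Multiset.map (fun a => X - C a) (Dpoly d s).roots).prod = Dpoly d s :=
      prod_multiset_X_sub_C_of_monic_of_roots_card_eq hm (by rw [hc, Dpoly_deg])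
    conv_rhs => rw [← h1]
    rw [Finset.prod, Multiset.toFinset_val, hnd.dedup]
  have := main_aux (ι := (Dpoly d s).roots.toFinset) (d := d) (by omega) (by
    rw [Fintype.card_coe, Multiset.toFinset_card_of_nodup hnd, hc]) (fun j => (j:ℂ))
    Subtype.val_injective
  rw [hprod, cf_Dpoly] at this
  exact this
end

section
/- For all integers n ≥ d ≥ 2 there exist a squarefree polynomial D ∈ ℂ[t] of degree 2d and a solution (A,B) of the Pell–Abel equation for D with deg A = n such that every solution (A′,B′) of the Pell–Abel equation for D satisfies deg A′ ≥ n (i.e., (A,B) is a primitive solution of degree n). -/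
open Polynomial Filter Topology

lemma pa_strict {ι : Type*} [Fintype ι] [DecidableEq ι] (Q : ℝ[X]) (R : ι → ℝ[X]) (y : ι → ℝ) (i : ι) :
    HasStrictFDerivAt (fun p : (ι → ℝ) × (ι → ℝ) => Q.eval (p.2 i) + ∑ j, p.1 j * (R j).eval (p.2 i))
      ((Q.derivative.eval (y i)) • ((ContinuousLinearMap.proj i : (ι → ℝ) →L[ℝ] ℝ).comp
          (ContinuousLinearMap.snd ℝ (ι → ℝ) (ι → ℝ))) +
        ∑ j, ((R j).eval (y i)) • ((ContinuousLinearMap.proj j : (ι → ℝ) →L[ℝ] ℝ).comp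
          (ContinuousLinearMap.fst ℝ (ι → ℝ) (ι → ℝ)))) ((0 : ι → ℝ), y) := by
  have hs : HasStrictFDerivAt (fun p : (ι → ℝ) × (ι → ℝ) => p.2 i)
      ((ContinuousLinearMap.proj i : (ι → ℝ) →L[ℝ] ℝ).comp
          (ContinuousLinearMap.snd ℝ (ι → ℝ) (ι → ℝ))) ((0 : ι → ℝ), y) :=
    ((ContinuousLinearMap.proj i : (ι → ℝ) →L[ℝ] ℝ).comp
          (ContinuousLinearMap.snd ℝ (ι → ℝ) (ι → ℝ))).hasStrictFDerivAt
  have hf : ∀ j, HasStrictFDerivAt (fun p : (ι → ℝ) × (ι → ℝ) => p.1 j)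
      ((ContinuousLinearMap.proj j : (ι → ℝ) →L[ℝ] ℝ).comp
          (ContinuousLinearMap.fst ℝ (ι → ℝ) (ι → ℝ))) ((0 : ι → ℝ), y) := fun j =>
    ((ContinuousLinearMap.proj j : (ι → ℝ) →L[ℝ] ℝ).comp
          (ContinuousLinearMap.fst ℝ (ι → ℝ) (ι → ℝ))).hasStrictFDerivAt
  refine HasStrictFDerivAt.add ?_ ?_
  · exact (Q.hasStrictDerivAt (y i)).comp_hasStrictFDerivAt ((0 : ι → ℝ), y) hs
  · refine HasStrictFDerivAt.fun_sum fun j _ => ?_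
    have := (hf j).mul (((R j).hasStrictDerivAt (y i)).comp_hasStrictFDerivAt ((0 : ι → ℝ), y) hs)
    refine this.congr_fderiv ?_
    simp

lemma pa_perturb {ι : Type*} [Fintype ι] [DecidableEq ι] (T : ℝ[X]) (y : ι → ℝ)
    (hinj : Function.Injective y) (h1 : ∀ i, T.derivative.eval (y i) = 0)
    (h2 : ∀ i, T.derivative.derivative.eval (y i) ≠ 0) (W : Set (ι → ℝ)) (hW : W ∈ 𝓝 y) :
    ∀ᶠ v in 𝓝 (fun i => T.eval (y i)), ∃ H : ℝ[X], H.degree < Fintype.card ι ∧ ∃ x ∈ W,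
      ∀ i, (T + H).eval (x i) = v i ∧ (T + H).derivative.eval (x i) = 0 := by
  set l : ι → ℝ[X] := fun j => Lagrange.basis Finset.univ y j with hl
  set G : (ι → ℝ) × (ι → ℝ) → (ι → ℝ × ℝ) := fun p i =>
    (T.eval (p.2 i) + ∑ j, p.1 j * (l j).eval (p.2 i),
      T.derivative.eval (p.2 i) + ∑ j, p.1 j * (l j).derivative.eval (p.2 i)) with hG
  have hGd := hasStrictFDerivAt_pi.2 fun i =>
    (pa_strict T l y i).prodMk (pa_strict T.derivative (fun j => (l j).derivative) y i)
  have hsurj := hGd.map_nhds_eq_of_surj (by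
    rw [LinearMap.range_eq_top]
    intro v
    refine ⟨(fun i => (v i).1, fun i => ((v i).2 - ∑ j, (l j).derivative.eval (y i) * (v j).1) /
      T.derivative.derivative.eval (y i)), ?_⟩
    funext i
    ext
    · have : ∀ j, eval (y i) (l j) = if j = i then 1 else 0 := by
        intro j
        split_ifs with h
        · subst h
          exact Lagrange.eval_basis_self hinj.injOn (Finset.mem_univ _)
        · exact Lagrange.eval_basis_of_ne h (Finset.mem_univ _)
      simp [h1, this]
    · simp
      field_simp [h2 i]
      ring)
  have hG0 : G (0, y) = fun i => (T.eval (y i), 0) := by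
    funext i; simp [hG, h1]
  have hWW : (Set.univ ×ˢ W) ∈ 𝓝 ((0 : ι → ℝ), y) := prod_mem_nhds univ_mem hW
  have himg : G '' (Set.univ ×ˢ W) ∈ 𝓝 (G (0, y)) := by
    have := image_mem_map (m := G) hWW
    exact hsurj ▸ this
  rw [hG0] at himg
  have hcont : Continuous (fun (v : ι → ℝ) (i : ι) => (v i, (0 : ℝ))) := by fun_prop
  have := hcont.continuousAt (x := fun i => T.eval (y i)) himg
  filter_upwards [this] with v hv
  obtain ⟨⟨h, x⟩, ⟨-, hx⟩, he⟩ := hv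
  refine ⟨∑ j, C (h j) * l j, ?_, x, hx, fun i => ?_⟩
  · refine (Polynomial.degree_sum_le _ _).trans_lt ?_
    rw [Finset.sup_lt_iff (by exact WithBot.bot_lt_coe _)]
    intro j _
    have hle : (C (h j) * l j).degree ≤ (l j).degree := by
      rw [← smul_eq_C_mul]; exact degree_smul_le _ _
    refine hle.trans_lt ?_
    rw [hl, Lagrange.degree_basis hinj.injOn (Finset.mem_univ _)]
    have : 0 < Fintype.card ι := Fintype.card_pos_iff.2 ⟨j⟩
    rw [Finset.card_univ]
    exact_mod_cast Nat.sub_lt this one_pos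
  · have := congrFun he i
    simp only [hG, Prod.mk.injEq] at this
    refine ⟨?_, ?_⟩
    · rw [← this.1]; simp [eval_finsetSum]
    · rw [← this.2]; simp [eval_finsetSum]

lemma pa_exists_real (n d : ℕ) (hd : 2 ≤ d) (hn : d ≤ n) :
    ∃ (A : ℝ[X]) (x : Fin (n-1) → ℝ), StrictAnti x ∧ A.natDegree = n ∧ 0 < A.leadingCoeff ∧
      (∀ i, A.derivative.eval (x i) = 0) ∧ (∀ i, d - 1 ≤ i.val → (A.eval (x i))^2 = 1) ∧
      (∀ i, i.val < d - 1 → (A.eval (x i))^2 ≠ 1) ∧ (∀ i, i.val = 0 → A.eval (x i) < -1) := by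
  have hn0 : n ≠ 0 := by omega
  set y : Fin (n-1) → ℝ := fun i => Chebyshev.node n (i.val+1) with hy
  have hanti : StrictAnti y := fun i j hij =>
    Chebyshev.node_lt (by omega) (by simpa using hij)
  have hT : ∀ i, (Chebyshev.T ℝ n).eval (y i) = (-1)^(i.val+1) := fun i =>
    Chebyshev.eval_T_real_node (by simp; omega)
  have hy1 : ∀ i, 1 - (y i)^2 ≠ 0 := by
    intro i
    have a : y i < 1 := by
      rw [← Chebyshev.node_eq_one (n := n)]; exact Chebyshev.node_lt (by omega) (by omega)
    have b : -1 < y i := by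
      rw [← Chebyshev.node_eq_neg_one hn0]; exact Chebyshev.node_lt (by omega) (by omega)
    nlinarith
  have h1 : ∀ i, (Chebyshev.T ℝ n).derivative.eval (y i) = 0 := by
    intro i
    have := Chebyshev.isLocalExtr_T_real hn0 (k := i.val+1) (by omega) (by omega)
    have := this.deriv_eq_zero
    rw [Polynomial.deriv] at this
    exact this
  have h2 : ∀ i, (Chebyshev.T ℝ n).derivative.derivative.eval (y i) ≠ 0 := by
    intro i h0
    have := congrArg (eval (y i)) (Chebyshev.one_sub_X_sq_mul_derivative_derivative_T_eq_poly_in_T (R := ℝ) n)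
    simp [h0, h1 i, hT i, hn0] at this
  have hW : {x : Fin (n-1) → ℝ | StrictAnti x} ∈ 𝓝 y := by
    have : {x : Fin (n-1) → ℝ | StrictAnti x} = ⋂ i, ⋂ j, {x | i < j → x j < x i} := by
      ext x; simp [StrictAnti]
    rw [this]
    refine IsOpen.mem_nhds ?_ (by simpa using fun i j h => hanti h)
    refine isOpen_iInter_of_finite fun i => isOpen_iInter_of_finite fun j => ?_
    by_cases hij : i < j
    · simp only [hij, true_imp_iff]
      exact isOpen_lt (by fun_prop) (by fun_prop)
    · simp [hij]
  have key := pa_perturb (Chebyshev.T ℝ n) y hanti.injective h1 h2 _ hW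
  have hc : Tendsto (fun (δ : ℝ) (i : Fin (n-1)) => if i.val < d - 1 then (1 + δ) * (-1:ℝ)^(i.val+1) else (-1)^(i.val+1))
      (𝓝[>] 0) (𝓝 (fun i => (Chebyshev.T ℝ n).eval (y i))) := by
    refine tendsto_nhdsWithin_of_tendsto_nhds ?_
    have : Continuous (fun (δ : ℝ) (i : Fin (n-1)) => if i.val < d - 1 then (1 + δ) * (-1:ℝ)^(i.val+1) else (-1)^(i.val+1)) := by
      refine continuous_pi fun i => ?_
      split_ifs <;> fun_prop
    convert this.tendsto 0 using 2
    funext i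
    simp [hT]
  obtain ⟨δ, ⟨H, hH, x, hx, hv⟩, hδ⟩ := ((hc.eventually key).and self_mem_nhdsWithin).exists
  have hδ : 0 < δ := hδ
  have hdeg : H.degree < (Chebyshev.T ℝ n).degree := by
    rw [Chebyshev.degree_T]
    refine hH.trans_le ?_
    simp
  have hv : ∀ i, (Chebyshev.T ℝ n + H).eval (x i) = (if i.val < d - 1 then (1 + δ) * (-1:ℝ)^(i.val+1) else (-1)^(i.val+1)) ∧ (Chebyshev.T ℝ n + H).derivative.eval (x i) = 0 := hv
  have hsq : ∀ k : ℕ, ((-1:ℝ)^k)^2 = 1 := fun k => by rw [← pow_mul, mul_comm, pow_mul]; simp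
  refine ⟨Chebyshev.T ℝ n + H, x, hx, ?_, ?_, fun i => (hv i).2, ?_, ?_, ?_⟩
  · rw [natDegree_add_eq_left_of_degree_lt hdeg]; simp
  · rw [leadingCoeff_add_of_degree_lt' hdeg]; simp
  · intro i hi
    rw [(hv i).1, if_neg (by omega), hsq]
  · intro i hi
    rw [(hv i).1, if_pos hi, mul_pow, hsq]
    nlinarith
  · intro i hi
    rw [(hv i).1, if_pos (by omega), hi, zero_add, pow_one]
    linarith
lemma pa_sq_one {R : Type*} [CommRing R] [IsDomain R] {a : R} (h : a^2 = 1) : a = 1 ∨ a = -1 := by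
  have : (a-1)*(a+1) = 0 := by linear_combination h
  exact (mul_eq_zero.1 this).imp (fun h => by linear_combination h) (fun h => by linear_combination h)


lemma pa_step (D A0 B0 A B : ℂ[X]) (h0 : A0^2 - D*B0^2 = 1) (k : ℤ) (s : ℂ[X])
    (hA : A*A0 - D*B*B0 = s * (Chebyshev.T ℂ k).comp A0)
    (hB : B*A0 - A*B0 = s * (Chebyshev.U ℂ (k-1)).comp A0 * B0) :
    A = s * (Chebyshev.T ℂ (k+1)).comp A0 ∧ B = s * (Chebyshev.U ℂ (k+1-1)).comp A0 * B0 := by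
  have e1 := congrArg (fun p => p.comp A0) (Chebyshev.T_eq_X_mul_T_sub_pol_U ℂ (k-1))
  have e2 := congrArg (fun p => p.comp A0) (Chebyshev.U_eq_X_mul_U_add_T ℂ (k-1))
  simp only [sub_comp, mul_comp, add_comp, one_comp, pow_comp, X_comp] at e1 e2
  rw [show k - 1 + 2 = k+1 by ring, show k-1+1 = k by ring] at e1
  rw [show k-1+1 = k by ring] at e2
  rw [show k+1-1 = k by ring, e1, e2]
  constructor
  · linear_combination A0 * hA + D * B0 * hB - A * h0 - s * (Chebyshev.U ℂ (k-1)).comp A0 * h0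
  · linear_combination B0 * hA + A0 * hB - B * h0

lemma pa_class (D A0 B0 : ℂ[X]) (hD : D.natDegree ≠ 0) (hB0 : B0 ≠ 0) (h0 : A0^2 - D*B0^2 = 1)
    (hmin : ∀ A B : ℂ[X], B ≠ 0 → A^2 - D*B^2 = 1 → A0.natDegree ≤ A.natDegree) (N : ℕ) :
    ∀ A B : ℂ[X], A.natDegree = N → A^2 - D*B^2 = 1 → ∃ (k : ℤ) (s : ℂ[X]), (s = 1 ∨ s = -1) ∧
      A = s * (Chebyshev.T ℂ k).comp A0 ∧ B = s * (Chebyshev.U ℂ (k-1)).comp A0 * B0 := by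
  have hD0 : D ≠ 0 := by rintro rfl; simp at hD
  have hm : 0 < A0.natDegree := by
    by_contra hc
    have hc : A0.natDegree = 0 := by omega
    have h1 : (D * B0^2).natDegree = D.natDegree + 2 * B0.natDegree := by
      rw [natDegree_mul hD0 (pow_ne_zero _ hB0), natDegree_pow]
    have h2 : D * B0^2 = A0^2 - 1 := by linear_combination -h0
    have h3 : (A0^2 - 1).natDegree ≤ 0 := by
      refine (natDegree_sub_le _ _).trans ?_
      simp [hc]
    rw [← h2] at h3; omega
  induction N using Nat.strong_induction_on with
  | _ N ih =>
  intro A B hN h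
  by_cases hB : B = 0
  · subst hB
    have : A^2 = 1 := by simpa using h
    refine ⟨0, A, pa_sq_one this, ?_, ?_⟩ <;> simp
  have hmA := hmin A B hB h
  have hA0 : A ≠ 0 := by rintro rfl; simp at hmA; omega
  have hA00 : A0 ≠ 0 := by rintro rfl; simp at hm
  set A1 := A*A0 - D*B*B0 with hA1
  set A2 := A*A0 + D*B*B0 with hA2
  have e1 : A1^2 - D*(B*A0 - A*B0)^2 = 1 := by
    rw [hA1]; linear_combination (A0^2 - D * B0^2) * h + h0
  have e2 : A2^2 - D*((-B)*A0 - A*B0)^2 = 1 := by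
    rw [hA2]; linear_combination (A0^2 - D * B0^2) * h + h0
  have hprod : A1 * A2 = A^2 + A0^2 - 1 := by
    rw [hA1, hA2]
    linear_combination (A0^2-1) * h + D*B^2 * h0
  have hpd : (A1*A2).natDegree ≤ 2 * N := by
    rw [hprod]
    refine (natDegree_sub_le _ _).trans (max_le ((natDegree_add_le _ _).trans (max_le ?_ ?_)) ?_)
    · rw [natDegree_pow, hN]
    · rw [natDegree_pow]; omega
    · simp
  have hsd : (A1 + A2).natDegree = N + A0.natDegree := by
    have : A1 + A2 = C 2 * (A * A0) := by
      rw [hA1, hA2, show (C 2 : ℂ[X]) = 2 from rfl]; ring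
    rw [this, natDegree_C_mul (by norm_num), natDegree_mul hA0 hA00, hN]
  have hmx : N + A0.natDegree ≤ max A1.natDegree A2.natDegree := hsd ▸ natDegree_add_le _ _
  have hor : A1.natDegree < N ∨ A2.natDegree < N := by
    by_cases z1 : A1 = 0
    · left; rw [z1]; simp; omega
    by_cases z2 : A2 = 0
    · right; rw [z2]; simp; omega
    rw [natDegree_mul z1 z2] at hpd
    rcases le_max_iff.1 hmx with h | h <;> omega
  rcases hor with hlt | hlt
  · obtain ⟨k, s, hs, ha, hb⟩ := ih _ hlt A1 _ rfl e1
    obtain ⟨a, b⟩ := pa_step D A0 B0 A B h0 k s ha hb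
    exact ⟨k+1, s, hs, a, b⟩
  · obtain ⟨k, s, hs, ha, hb⟩ := ih _ hlt A2 _ rfl e2
    obtain ⟨a, b⟩ := pa_step D A0 B0 A (-B) h0 k s
      (by rw [← ha, hA2]; ring) hb
    refine ⟨-(k+1), s, hs, by rw [Chebyshev.T_neg]; exact a, ?_⟩
    rw [Chebyshev.U_neg_sub_one, neg_comp]
    linear_combination -b

lemma pa_cos_real (k : ℤ) (hk : k ≠ 0) (w : ℂ) (t : ℝ) (ht : t ∈ Set.Icc (-1:ℝ) 1)
    (h : (Chebyshev.T ℂ k).eval w = t) : ((w.re : ℝ) : ℂ) = w := by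
  obtain ⟨z, rfl⟩ := Complex.cos_surjective w
  rw [Chebyshev.T_complex_cos, ← Real.cos_arccos ht.1 ht.2, Complex.ofReal_cos, Complex.cos_eq_cos_iff] at h
  have hk' : (k : ℝ) ≠ 0 := by exact_mod_cast hk
  have him : z.im = 0 := by
    obtain ⟨j, h | h⟩ := h
    · have := congrArg Complex.im h
      simp at this
      tauto
    · have := congrArg Complex.im h
      simp at this
      tauto
  have hz : z = (z.re : ℂ) := by apply Complex.ext <;> simp [him]
  rw [hz, ← Complex.ofReal_cos, Complex.ofReal_re]

lemma pa_contra (A : ℝ[X]) (A0 : ℂ[X]) (k : ℤ) (hk : 2 ≤ k.natAbs) (s : ℂ[X]) (hs : s = 1 ∨ s = -1)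
    (hA : A.map (algebraMap ℝ ℂ) = s * (Chebyshev.T ℂ k).comp A0) (a b : ℝ) (hab : a < b)
    (hmono : StrictMonoOn (fun x => A.eval x) (Set.Icc a b)) (ha : A.eval a = -1) (hb : A.eval b = 1)
    (ha0 : (A0.eval (a:ℂ))^2 = 1) (hb0 : (A0.eval (b:ℂ))^2 = 1) : False := by
  have hk0 : k ≠ 0 := by rintro rfl; simp at hk
  obtain ⟨σ, hσ, hev⟩ : ∃ σ : ℝ, (σ = 1 ∨ σ = -1) ∧ ∀ x : ℝ,
      (Chebyshev.T ℂ k).eval (A0.eval (x:ℂ)) = ((σ * A.eval x : ℝ) : ℂ) := by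
    have hx : ∀ x : ℝ, ((A.eval x : ℝ) : ℂ) = s.eval (x:ℂ) * (Chebyshev.T ℂ k).eval (A0.eval (x:ℂ)) := by
      intro x
      have := congrArg (eval (x:ℂ)) hA
      rw [eval_mul, eval_comp] at this
      rw [← this, eval_map_algebraMap]
      exact (Polynomial.aeval_algebraMap_apply ℂ x A).symm
    rcases hs with rfl | rfl
    · refine ⟨1, Or.inl rfl, fun x => ?_⟩
      have := hx x; simp at this; simp [this]
    · refine ⟨-1, Or.inr rfl, fun x => ?_⟩
      have := hx x; simp at this; simp [this]
  set f : ℝ → ℝ := fun x => (A0.eval (x:ℂ)).re with hf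
  have hfc : Continuous f := by
    refine Complex.continuous_re.comp (A0.continuous.comp Complex.continuous_ofReal)
  have hfr : ∀ x ∈ Set.Icc a b, ((f x : ℝ) : ℂ) = A0.eval (x:ℂ) := by
    intro x hx
    refine pa_cos_real k hk0 _ (σ * A.eval x) ?_ (hev x)
    have l1 := hmono.monotoneOn (Set.left_mem_Icc.2 hab.le) hx hx.1
    have l2 := hmono.monotoneOn hx (Set.right_mem_Icc.2 hab.le) hx.2
    simp only [ha, hb] at l1 l2
    rcases hσ with rfl | rfl <;> constructor <;> linarith
  have hTf : ∀ x ∈ Set.Icc a b, (Chebyshev.T ℝ k).eval (f x) = σ * A.eval x := by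
    intro x hx
    have := hev x
    rw [← hfr x hx, ← Chebyshev.complex_ofReal_eval_T] at this
    exact_mod_cast this
  have hma := Set.left_mem_Icc.2 hab.le
  have hmb := Set.right_mem_Icc.2 hab.le
  have hfa : f a = 1 ∨ f a = -1 := by
    rw [← hfr a hma] at ha0
    exact pa_sq_one (by exact_mod_cast ha0)
  have hfb : f b = 1 ∨ f b = -1 := by
    rw [← hfr b hmb] at hb0
    exact pa_sq_one (by exact_mod_cast hb0)
  have hne : f a ≠ f b := by
    intro h
    have h1 := hTf a hma
    have h2 := hTf b hmb
    rw [h, h2, ha, hb] at h1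
    rcases hσ with rfl | rfl <;> norm_num at h1
  set K := k.natAbs with hK
  have hK0 : (0:ℝ) < K := by exact_mod_cast (by omega : 0 < K)
  have hK2 : (2:ℝ) ≤ K := by exact_mod_cast hk
  set c := Real.cos (Real.pi / K) with hc
  have hc1 : c < 1 := by
    rw [← Real.cos_zero]
    refine Real.cos_lt_cos_of_nonneg_of_le_pi le_rfl ?_ (by positivity)
    rw [div_le_iff₀ hK0]; nlinarith [Real.pi_pos]
  have hc2 : -1 < c := by
    rw [← Real.cos_pi]
    refine Real.cos_lt_cos_of_nonneg_of_le_pi (by positivity) le_rfl ?_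
    rw [div_lt_iff₀ hK0]; nlinarith [Real.pi_pos]
  have hiv : c ∈ Set.uIcc (f a) (f b) := by
    rw [Set.mem_uIcc]
    rcases hfa with h | h <;> rcases hfb with h' | h' <;> rw [h, h'] at hne ⊢
    · exact absurd rfl hne
    · right; constructor <;> linarith
    · left; constructor <;> linarith
    · exact absurd rfl hne
  obtain ⟨x, hx, hxc⟩ := intermediate_value_uIcc hfc.continuousOn hiv
  rw [Set.uIcc_of_le hab.le] at hx
  have hTc : (Chebyshev.T ℝ k).eval c = -1 := by
    rw [← Chebyshev.T_natAbs, hc, Chebyshev.T_real_cos]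
    have : (((k.natAbs : ℤ) : ℝ)) * (Real.pi / K) = Real.pi := by
      rw [← hK, Int.cast_natCast]; field_simp
    rw [this, Real.cos_pi]
  have hAx := hTf x hx
  rw [hxc, hTc] at hAx
  have : A.eval x = A.eval a ∨ A.eval x = A.eval b := by
    rw [ha, hb]
    rcases hσ with rfl | rfl
    · left; linarith
    · right; linarith
  have : x = a ∨ x = b := this.imp (fun h => hmono.injOn hx hma h) (fun h => hmono.injOn hx hmb h)
  rcases this with rfl | rfl
  · rcases hfa with h | h <;> linarith
  · rcases hfb with h | h <;> linarith

lemma pa_factor (n : ℕ) (hn : 2 ≤ n) (A : ℝ[X]) (x : Fin (n-1) → ℝ) (hx : StrictAnti x)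
    (hA : A.natDegree = n) (hl : 0 < A.leadingCoeff) (h : ∀ i, A.derivative.eval (x i) = 0) :
    ∃ c : ℝ, 0 < c ∧ A.derivative = C c * ∏ i, (X - C (x i)) := by
  have hdvd : ∏ i, (X - C (x i)) ∣ A.derivative :=
    Finset.prod_dvd_of_coprime
      (fun i _ j _ hij => pairwise_coprime_X_sub_C hx.injective hij)
      (fun i _ => dvd_iff_isRoot.2 (h i))
  have hdeg : A.derivative.natDegree = n - 1 := by
    rw [natDegree_derivative, hA]
  obtain ⟨q, hq⟩ := hdvd
  have hd0 : A.derivative ≠ 0 := by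
    intro h0; rw [h0] at hdeg; simp at hdeg; omega
  have hmonic : (∏ i, (X - C (x i))).Monic := monic_prod_X_sub_C _ _
  have hq0 : q ≠ 0 := by rintro rfl; exact hd0 (by rw [hq, mul_zero])
  have hpn : (∏ i, (X - C (x i))).natDegree = n - 1 := by
    rw [natDegree_prod_of_monic _ _ (fun i _ => monic_X_sub_C _)]; simp
  have hqd : q.natDegree = 0 := by
    have := hmonic.natDegree_mul' hq0
    rw [← hq, hdeg, hpn] at this; omega
  obtain ⟨c, rfl⟩ := natDegree_eq_zero.1 hqd
  refine ⟨c, ?_, by rw [hq]; ring⟩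
  have hlc : A.derivative.leadingCoeff = c := by
    rw [hq, leadingCoeff_mul, hmonic.leadingCoeff, one_mul, leadingCoeff_C]
  rw [← hlc, leadingCoeff, hdeg, coeff_derivative, show n - 1 + 1 = n by omega]
  rw [leadingCoeff, hA] at hl
  positivity

lemma pa_interval (n : ℕ) (hn : 2 ≤ n) (A : ℝ[X]) (x : Fin (n-1) → ℝ) (hx : StrictAnti x)
    (hA : A.natDegree = n) (hl : 0 < A.leadingCoeff) (c : ℝ) (hc : 0 < c)
    (hf : A.derivative = C c * ∏ i, (X - C (x i))) (h0 : ∀ i, i.val = 0 → A.eval (x i) < -1) :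
    ∃ a b : ℝ, a < b ∧ A.eval a = -1 ∧ A.eval b = 1 ∧ (∀ i, x i < a) ∧
      StrictMonoOn (fun t => A.eval t) (Set.Icc a b) := by
  set z : Fin (n-1) := ⟨0, by omega⟩ with hz
  have hxz : ∀ i, x i ≤ x z := fun i => hx.antitone (Fin.le_def.2 (by simp [hz]))
  have hz1 : A.eval (x z) < -1 := h0 z rfl
  have hmono : StrictMonoOn (fun t => A.eval t) (Set.Ici (x z)) := by
    refine strictMonoOn_of_deriv_pos (convex_Ici _) A.continuous.continuousOn ?_
    intro t ht
    rw [interior_Ici] at ht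
    have ht : x z < t := ht
    rw [Polynomial.deriv, hf, eval_mul, eval_C, eval_prod]
    refine mul_pos hc (Finset.prod_pos fun i _ => ?_)
    simp only [eval_sub, eval_X, eval_C]
    linarith [hxz i]
  have htop : Tendsto (fun t => A.eval t) atTop atTop := by
    refine Polynomial.tendsto_atTop_of_leadingCoeff_nonneg A ?_ hl.le
    rw [← natDegree_pos_iff_degree_pos]; omega
  obtain ⟨M, hM1, hM2⟩ := ((htop.eventually_ge_atTop 1).and (eventually_ge_atTop (x z))).exists
  obtain ⟨b, hb, hb1⟩ := intermediate_value_Icc hM2 A.continuous.continuousOn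
    (show (1:ℝ) ∈ Set.Icc (A.eval (x z)) (A.eval M) from ⟨by linarith, hM1⟩)
  obtain ⟨a, ha, ha1⟩ := intermediate_value_Icc hb.1 A.continuous.continuousOn
    (show (-1:ℝ) ∈ Set.Icc (A.eval (x z)) (A.eval b) from ⟨by linarith, by simp only at hb1; linarith⟩)
  simp only at ha1 hb1
  have hza : x z < a := lt_of_le_of_ne ha.1 (by rintro h; rw [← h] at ha1; linarith)
  refine ⟨a, b, lt_of_le_of_ne ha.2 ?_, ha1, hb1, fun i => (hxz i).trans_lt hza,
    hmono.mono fun t ht => ha.1.trans ht.1⟩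
  rintro rfl; linarith

theorem stmt1 (n d : ℕ) (hd : 2 ≤ d) (hn : d ≤ n) :
    ∃ D A B : Polynomial ℂ, Squarefree D ∧ D.natDegree = 2*d ∧
      B ≠ 0 ∧ A ^ 2 - D * B ^ 2 = 1 ∧ A.natDegree = n ∧
      ∀ A' B' : Polynomial ℂ, B' ≠ 0 → A' ^ 2 - D * B' ^ 2 = 1 → n ≤ A'.natDegree := by
  obtain ⟨A, x, hx, hA, hl, hder, hkeep, halt, h0⟩ := pa_exists_real n d hd hn
  obtain ⟨c, hc, hf⟩ := pa_factor n (by omega) A x hx hA hl hder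
  obtain ⟨a, b, hab, ha, hb, hxa, hmono⟩ := pa_interval n (by omega) A x hx hA hl c hc hf h0
  set P : ℂ[X] := A.map (algebraMap ℝ ℂ) with hP
  have hPev : ∀ t : ℝ, P.eval (t:ℂ) = ((A.eval t : ℝ) : ℂ) := by
    intro t
    rw [hP, eval_map_algebraMap]
    exact Polynomial.aeval_algebraMap_apply ℂ t A
  have hPn : P.natDegree = n := by rw [hP, natDegree_map, hA]
  have hPd : P.derivative = C (c:ℂ) * ∏ i, (X - C ((x i : ℝ) : ℂ)) := by
    rw [hP, derivative_map, hf]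
    simp [Polynomial.map_prod]
  have hc0 : (c:ℂ) ≠ 0 := by exact_mod_cast hc.ne'
  have hxinj : Function.Injective (fun i => ((x i : ℝ) : ℂ)) :=
    Complex.ofReal_injective.comp hx.injective
  have hsep : P.derivative.Separable := by
    rw [hPd]
    exact (separable_prod_X_sub_C_iff.2 hxinj).unit_mul
      (Polynomial.isUnit_C.2 (isUnit_iff_ne_zero.2 hc0))
  have hroot : ∀ r : ℂ, P.derivative.eval r = 0 → ∃ i, r = x i := by
    intro r hr
    rw [hPd, eval_mul, eval_C, eval_prod] at hr
    obtain ⟨i, -, hi⟩ := Finset.prod_eq_zero_iff.1 ((mul_eq_zero.1 hr).resolve_left hc0)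
    exact ⟨i, by simpa [sub_eq_zero] using hi⟩
  have hPx : ∀ i, P.derivative.eval ((x i : ℝ) : ℂ) = 0 := by
    intro i
    rw [hPd, eval_mul, eval_prod, Finset.prod_eq_zero (Finset.mem_univ i) (by simp), mul_zero]
  set s : Finset (Fin (n-1)) := Finset.univ.filter (fun i => d - 1 ≤ i.val) with hs
  have hcard : s.card = n - d := by
    have h1 : (Finset.univ.filter (fun i : Fin (n-1) => i.val < d - 1)).card = d - 1 := by
      rw [Fin.card_filter_val_lt]; omega
    have h2 := Finset.card_filter_add_card_filter_not (s := (Finset.univ : Finset (Fin (n-1))))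
      (fun i : Fin (n-1) => i.val < d - 1)
    have h3 : Finset.univ.filter (fun i : Fin (n-1) => ¬ i.val < d - 1) = s := by
      rw [hs]; exact Finset.filter_congr fun i _ => not_lt
    rw [h3, h1, Finset.card_univ, Fintype.card_fin] at h2
    omega
  set B : ℂ[X] := ∏ i ∈ s, (X - C ((x i : ℝ) : ℂ)) with hB
  have hBm : B.Monic := monic_prod_X_sub_C _ _
  have hBn : B.natDegree = n - d := by
    rw [hB, natDegree_prod_of_monic _ _ (fun i _ => monic_X_sub_C _)]; simp [hcard]
  set E : ℂ[X] := P^2 - 1 with hE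
  have hEd : E.derivative = 2 * P * P.derivative := by
    rw [hE, derivative_sub, derivative_one, sq, derivative_mul]; ring
  have hEn : E.natDegree = 2 * n := by
    rw [hE, natDegree_sub_eq_left_of_natDegree_lt] <;> rw [natDegree_pow, hPn]
    simp; omega
  have hE0 : E ≠ 0 := by intro h; rw [h] at hEn; simp at hEn; omega
  have hBE : B^2 ∣ E := by
    rw [hB, ← Finset.prod_pow]
    refine Finset.prod_dvd_of_coprime
      (fun i _ j _ hij => (pairwise_coprime_X_sub_C hxinj hij).pow) (fun i hi => ?_)
    rw [← le_rootMultiplicity_iff hE0]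
    refine (one_lt_rootMultiplicity_iff_isRoot hE0).2 ⟨?_, ?_⟩
    · rw [IsRoot.def, hE, eval_sub, eval_pow, hPev, eval_one, sub_eq_zero]
      exact_mod_cast hkeep i (Finset.mem_filter.1 hi).2
    · rw [IsRoot.def, hEd, eval_mul, hPx, mul_zero]
  obtain ⟨D, hD⟩ := hBE
  have hD0 : D ≠ 0 := by rintro rfl; simp at hD; exact hE0 hD
  have hDn : D.natDegree = 2 * d := by
    have := (hBm.pow 2).natDegree_mul' hD0
    rw [← hD, hEn, natDegree_pow, hBn] at this
    omega
  have hpell : P^2 - D * B^2 = 1 := by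
    linear_combination -hE + hD
  have hDz : ∀ t : ℝ, (A.eval t)^2 = 1 → (∀ i, x i < t) → D.eval (t:ℂ) = 0 := by
    intro t ht hxt
    have h1 := congrArg (eval (t:ℂ)) hD
    rw [hE, eval_sub, eval_pow, hPev, eval_one, eval_mul, eval_pow] at h1
    have h2 : (((A.eval t : ℝ) : ℂ))^2 = 1 := by exact_mod_cast ht
    rw [h2, sub_self] at h1
    refine (mul_eq_zero.1 h1.symm).resolve_left (pow_ne_zero _ ?_)
    rw [hB, eval_prod]
    refine Finset.prod_ne_zero_iff.2 fun i _ => ?_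
    simp only [eval_sub, eval_X, eval_C, sub_ne_zero]
    exact_mod_cast (hxt i).ne'
  refine ⟨D, P, B, ?_, hDn, hBm.ne_zero, hpell, hPn, ?_⟩
  · intro p hp
    by_contra hu
    have hp0 : p ≠ 0 := by rintro rfl; simp at hp; exact hD0 hp
    obtain ⟨r, hr⟩ := IsAlgClosed.exists_root p (fun h => hu (isUnit_iff_degree_eq_zero.2 h))
    have hrD : (X - C r)^2 ∣ D := by
      rw [sq]; exact (mul_dvd_mul (dvd_iff_isRoot.2 hr) (dvd_iff_isRoot.2 hr)).trans hp
    obtain ⟨Q, hQ⟩ := hrD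
    have hE1 : E.eval r = 0 := by rw [hD, hQ]; simp
    have hE2 : E.derivative.eval r = 0 := by rw [hD, hQ]; simp [derivative_mul, derivative_pow]
    have hPr : P.eval r ^ 2 = 1 := by
      rw [hE] at hE1; simpa [sub_eq_zero] using hE1
    have hPr0 : P.eval r ≠ 0 := by intro h; rw [h] at hPr; simp at hPr
    have hPdr : P.derivative.eval r = 0 := by
      rw [hEd] at hE2
      simpa [hPr0] using hE2
    obtain ⟨i, rfl⟩ := hroot r hPdr
    by_cases hi : d - 1 ≤ i.val
    · obtain ⟨R, hR⟩ : (X - C ((x i : ℝ) : ℂ)) ∣ B :=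
        Finset.dvd_prod_of_mem _ (Finset.mem_filter.2 ⟨Finset.mem_univ _, hi⟩)
      have hE3 : E.derivative.derivative.eval ((x i : ℝ) : ℂ) = 0 := by
        rw [hD, hQ, hR]; simp [derivative_mul, derivative_pow]
      have hP2 : P.derivative.derivative.eval ((x i : ℝ) : ℂ) = 0 := by
        rw [hEd] at hE3
        simpa [derivative_mul, hPdr, hPr0] using hE3
      obtain ⟨u, v, huv⟩ := hsep
      have := congrArg (eval ((x i : ℝ) : ℂ)) huv
      simp [hPdr, hP2] at this
    · refine halt i (by omega) ?_
      rw [hPev] at hPr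
      exact_mod_cast hPr
  · intro A' B' hB' hp'
    by_contra hlt
    have hex : ∃ m, ∃ A0 B0 : ℂ[X], B0 ≠ 0 ∧ A0^2 - D * B0^2 = 1 ∧ A0.natDegree = m :=
      ⟨_, A', B', hB', hp', rfl⟩
    classical
    obtain ⟨A0, B0, hB0, hp0, hm⟩ := Nat.find_spec hex
    have hmin : ∀ A B : ℂ[X], B ≠ 0 → A^2 - D*B^2 = 1 → A0.natDegree ≤ A.natDegree := by
      intro A B hB h
      rw [hm]; exact Nat.find_min' hex ⟨A, B, hB, h, rfl⟩
    have hmn : A0.natDegree < n := (hmin A' B' hB' hp').trans_lt (by omega)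
    obtain ⟨k, σ, hσ, hk, -⟩ := pa_class D A0 B0 (by omega) hB0 hp0 hmin n P B hPn hpell
    have hk2 : 2 ≤ k.natAbs := by
      by_contra hcon
      have hdeg : P.natDegree = ((Chebyshev.T ℂ k).comp A0).natDegree := by
        rw [hk]; rcases hσ with rfl | rfl <;> simp
      rw [hPn, natDegree_comp, Chebyshev.natDegree_T] at hdeg
      have : k.natAbs * A0.natDegree ≤ 1 * A0.natDegree := Nat.mul_le_mul_right _ (by omega)
      omega
    have hends : ∀ t : ℝ, D.eval (t:ℂ) = 0 → (A0.eval (t:ℂ))^2 = 1 := by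
      intro t ht
      have := congrArg (eval (t:ℂ)) hp0
      simpa [ht] using this
    refine pa_contra A A0 k hk2 σ hσ hk a b hab hmono ha hb
      (hends a (hDz a (by rw [ha]; norm_num) hxa))
      (hends b (hDz b (by rw [hb]; norm_num) fun i => (hxa i).trans hab))
end

section
/- For every integer m ≥ 3, the monodromy group Mon(f_m) of the m-th power polynomial f_m is isomorphic, as a group, to the dihedral group of order 2m. -/
open Polynomial

lemma T_eval_half {L : Type*} [Field L] [CharZero L] (y : L) (hy : y ≠ 0) (n : ℕ) :
    (Polynomial.Chebyshev.T L (n : ℤ)).eval ((y + y⁻¹) / 2) = (y ^ n + (y ^ n)⁻¹) / 2 := by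
  induction n using Nat.strong_induction_on with
  | _ n ih =>
    match n, ih with
    | 0, _ => simp
    | 1, _ => simp
    | n + 2, ih =>
      have h1 := ih (n + 1) (by omega)
      have h0 := ih n (by omega)
      push_cast at h1 h0 ⊢
      rw [Polynomial.Chebyshev.T_add_two]
      simp only [eval_sub, eval_mul, eval_X, eval_ofNat, h1, h0]
      field_simp
      ring

lemma f_eq (m : ℕ) (f : Polynomial ℂ)
    (hf : f.comp (X ^ 2) = (Polynomial.Chebyshev.T ℂ (m : ℤ)) ^ 2) :
    2 * f = 1 + (Polynomial.Chebyshev.T ℂ (m : ℤ)).comp (2 * X - 1) := by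
  apply Polynomial.expand_injective (R := ℂ) (n := 2) (by norm_num)
  rw [expand_eq_comp_X_pow, expand_eq_comp_X_pow, mul_comp, hf, add_comp, comp_assoc]
  have h := Polynomial.Chebyshev.T_mul_T ℂ (m : ℤ) m
  have h2 := Polynomial.Chebyshev.T_mul ℂ (m : ℤ) 2
  rw [Polynomial.Chebyshev.T_two] at h2
  rw [← mul_two, h2, sub_self, Polynomial.Chebyshev.T_zero] at h
  simp only [ofNat_comp, one_comp, sub_comp, mul_comp, X_comp]
  linear_combination h

lemma f_natDegree (m : ℕ) (f : Polynomial ℂ)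
    (hf : f.comp (X ^ 2) = (Polynomial.Chebyshev.T ℂ (m : ℤ)) ^ 2) : f.natDegree = m := by
  have := congrArg natDegree hf
  rw [natDegree_comp, natDegree_pow, natDegree_pow, Polynomial.Chebyshev.natDegree_T] at this
  simp at this
  omega

lemma f_aeval {L : Type*} [Field L] [Algebra ℂ L] (m : ℕ) (f : Polynomial ℂ)
    (hf : f.comp (X ^ 2) = (Polynomial.Chebyshev.T ℂ (m : ℤ)) ^ 2) (y : L) (hy : y ≠ 0) :
    aeval ((2 + y + y⁻¹) / 4) f = (2 + y ^ m + (y ^ m)⁻¹) / 4 := by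
  have : CharZero L := charZero_of_injective_algebraMap (algebraMap ℂ L).injective
  have h := congrArg (aeval ((2 + y + y⁻¹) / 4)) (f_eq m f hf)
  rw [map_mul, map_add, aeval_comp, Polynomial.Chebyshev.aeval_T] at h
  have e : aeval ((2 + y + y⁻¹) / 4) (2 * X - 1 : ℂ[X]) = (y + y⁻¹) / 2 := by
    simp only [map_sub, map_mul, aeval_X, map_one, map_ofNat]
    ring
  rw [e, T_eval_half y hy, map_ofNat, map_one] at h
  linear_combination h / 2

lemma ratfunc_lift {L : Type*} [Field L] [Algebra ℂ L] (v : L) (hv : Transcendental ℂ v) :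
    ∃ φ : RatFunc ℂ →ₐ[ℂ] L, φ RatFunc.X = v := by
  have hinj : Function.Injective (aeval v : ℂ[X] →ₐ[ℂ] L) := transcendental_iff_injective.1 hv
  refine ⟨RatFunc.liftAlgHom (aeval v) ?_, ?_⟩
  · exact nonZeroDivisors_le_comap_nonZeroDivisors_of_injective _ hinj
  · simp [RatFunc.liftAlgHom_apply]

lemma ratfunc_ext {L : Type*} [Field L] [Algebra ℂ L] (φ ψ : RatFunc ℂ →ₐ[ℂ] L)
    (h : φ RatFunc.X = ψ RatFunc.X) : φ = ψ := by
  ext g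
  rw [← RatFunc.num_div_denom g, ← RatFunc.aeval_X_left_eq_algebraMap,
    ← RatFunc.aeval_X_left_eq_algebraMap, map_div₀, map_div₀, ← aeval_algHom_apply,
    ← aeval_algHom_apply, ← aeval_algHom_apply, ← aeval_algHom_apply, h]

lemma u_trans (m : ℕ) (hm : 3 ≤ m) :
    Transcendental ℂ ((2 + RatFunc.X ^ m + (RatFunc.X ^ m)⁻¹) / 4 : RatFunc ℂ) := by
  apply RatFunc.transcendental_of_ne_C
  rintro ⟨c, hc⟩
  have hX : (RatFunc.X : RatFunc ℂ) ^ m ≠ 0 := pow_ne_zero _ RatFunc.X_ne_zero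
  refine RatFunc.transcendental_X (K := ℂ) ⟨X ^ (2 * m) - C (4 * c - 2) * X ^ m + 1, ?_, ?_⟩
  · intro h
    have := congrArg (eval 0) h
    simp [show m ≠ 0 by omega] at this
  · simp only [map_add, map_sub, map_mul, map_pow, aeval_X, aeval_C, map_one, map_ofNat,
      RatFunc.algebraMap_eq_C]
    rw [← hc]
    field_simp
    ring

lemma add_inv_eq {L : Type*} [Field L] {a b : L} (ha : a ≠ 0) (hb : b ≠ 0)
    (h : a + a⁻¹ = b + b⁻¹) : a = b ∨ a * b = 1 := by
  have : (a - b) * (a * b - 1) = 0 := by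
    field_simp at h
    linear_combination h
  rcases mul_eq_zero.1 this with h | h
  · exact Or.inl (sub_eq_zero.1 h)
  · exact Or.inr (sub_eq_zero.1 h)

theorem main_aux_s8 {L : Type} [Field L] [Algebra ℂ L] [Algebra (RatFunc ℂ) L]
    [IsScalarTower ℂ (RatFunc ℂ) L] (z : L) (hz : Transcendental ℂ z)
    (hlift : ∀ v : L, Transcendental ℂ v → ∃ φ : L →ₐ[ℂ] L, φ z = v)
    (hext : ∀ φ ψ : L →ₐ[ℂ] L, φ z = ψ z → φ = ψ)
    (htop : IntermediateField.adjoin ℂ {z} = ⊤)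
    (m : ℕ) (hm : 3 ≤ m) (hu : algebraMap (RatFunc ℂ) L RatFunc.X = (2 + z ^ m + (z ^ m)⁻¹) / 4)
    (f : Polynomial ℂ)
    (hf : f.comp (X ^ 2) = (Polynomial.Chebyshev.T ℂ (m : ℤ)) ^ 2) :
    Nonempty ((f.map (algebraMap ℂ (RatFunc ℂ)) - Polynomial.C RatFunc.X).Gal ≃*
      DihedralGroup m) := by
  have : CharZero L := charZero_of_injective_algebraMap (algebraMap ℂ L).injective
  have : NeZero m := ⟨by omega⟩
  have hz0 : z ≠ 0 := by
    rintro rfl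
    exact hz isAlgebraic_zero
  obtain ⟨ζ, hζ, ζ', hζ'⟩ : ∃ ζ : L, IsPrimitiveRoot ζ m ∧
      ∃ ζ' : RatFunc ℂ, algebraMap _ L ζ' = ζ := by
    refine ⟨_, (Complex.isPrimitiveRoot_exp m (by omega)).map_of_injective
      (algebraMap ℂ L).injective, algebraMap ℂ _ _, (IsScalarTower.algebraMap_apply _ _ _ _).symm⟩
  have hζ0 : ζ ≠ 0 := hζ.ne_zero (by omega)
  have hpowalg : ∀ v : L, IsAlgebraic ℂ (v ^ m) → IsAlgebraic ℂ v :=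
    fun v h => h.of_pow (by omega)
  have hno : z ^ m * z ^ m ≠ 1 := by
    intro h
    apply hz
    apply hpowalg
    refine IsAlgebraic.of_pow (n := 2) (by norm_num) ?_
    rw [pow_two, h]
    exact isAlgebraic_one
  set p := f.map (algebraMap ℂ (RatFunc ℂ)) - Polynomial.C RatFunc.X with hp
  have hpdeg : p.natDegree = m := by
    rw [hp, natDegree_sub_C, natDegree_map, f_natDegree m f hf]
  have hp0 : p ≠ 0 := by
    intro h
    rw [h] at hpdeg
    simp at hpdeg
    omega
  -- roots
  have hroot : ∀ y : L, y ^ m = z ^ m → aeval ((2 + y + y⁻¹) / 4) p = 0 := by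
    intro y hy
    have hy0 : y ≠ 0 := by
      rintro rfl
      rw [zero_pow (by omega)] at hy
      exact pow_ne_zero m hz0 hy.symm
    rw [hp, map_sub, aeval_map_algebraMap, aeval_C, f_aeval m f hf y hy0, hu, hy, sub_self]
  have hrs : ∀ y : L, y ^ m = z ^ m → (2 + y + y⁻¹) / 4 ∈ p.rootSet L := fun y hy =>
    (mem_rootSet.2 ⟨hp0, hroot y hy⟩)
  have hζpow : ∀ i : ℕ, (ζ ^ i * z) ^ m = z ^ m := by
    intro i
    rw [mul_pow, ← pow_mul, mul_comm i, pow_mul, hζ.pow_eq_one, one_pow, one_mul]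
  have hsf : p.IsSplittingField (RatFunc ℂ) L := by
    rw [isSplittingField_iff_intermediateField]
    constructor
    · rw [splits_iff_card_roots]
      apply le_antisymm (card_roots' _)
      rw [natDegree_map, hpdeg]
      let g : Fin m → L := fun i => (2 + (ζ ^ (i : ℕ) * z) + (ζ ^ (i : ℕ) * z)⁻¹) / 4
      have hg : Function.Injective g := by
        intro i j hij
        have hi0 : ζ ^ (i : ℕ) * z ≠ 0 := mul_ne_zero (pow_ne_zero _ hζ0) hz0
        have hj0 : ζ ^ (j : ℕ) * z ≠ 0 := mul_ne_zero (pow_ne_zero _ hζ0) hz0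
        have hm' := hζpow i
        have hn' := hζpow j
        simp only [g] at hij
        rcases add_inv_eq hi0 hj0 (by linear_combination 4 * hij) with h | h
        · exact Fin.ext (hζ.pow_inj i.2 j.2 (mul_right_cancel₀ hz0 h))
        · exfalso
          apply hno
          have := congrArg (· ^ m) h
          simp only [one_pow] at this
          rw [mul_pow (ζ ^ (i : ℕ) * z), hm', hn'] at this
          exact this
      classical
      have h1 : Finset.univ.image g ⊆ (p.map (algebraMap (RatFunc ℂ) L)).roots.toFinset := by
        intro w hw
        obtain ⟨i, -, rfl⟩ := Finset.mem_image.1 hw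
        exact Multiset.mem_toFinset.2 (mem_aroots.2 ⟨hp0, hroot _ (hζpow i)⟩)
      have h2 := (Finset.card_le_card h1).trans (Multiset.toFinset_card_le _)
      rwa [Finset.card_image_of_injective _ hg, Finset.card_univ, Fintype.card_fin] at h2
    · set E := IntermediateField.adjoin (RatFunc ℂ) (p.rootSet L) with hE
      have h0 : (2 + z + z⁻¹) / 4 ∈ E := IntermediateField.subset_adjoin _ _ (hrs z rfl)
      have h1 : (2 + ζ * z + (ζ * z)⁻¹) / 4 ∈ E :=
        IntermediateField.subset_adjoin _ _ (hrs _ (by simpa using hζpow 1))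
      have hζE : ζ ∈ E := hζ' ▸ E.algebraMap_mem ζ'
      have hd : ζ - ζ⁻¹ ≠ 0 := by
        intro h
        have h2 : ζ ^ 2 = 1 := by
          field_simp at h
          linear_combination h
        have := Nat.le_of_dvd (by norm_num) (hζ.dvd_of_pow_eq_one 2 h2)
        omega
      have hnat : ∀ n : ℕ, (n : L) ∈ E := fun n => natCast_mem E n
      have hzE : z ∈ E := by
        have e : z = ((4 : ℕ) * ((2 + ζ * z + (ζ * z)⁻¹) / 4) - (2 : ℕ)
            - ζ⁻¹ * ((4 : ℕ) * ((2 + z + z⁻¹) / 4) - (2 : ℕ))) / (ζ - ζ⁻¹) := by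
          rw [eq_div_iff hd]
          push_cast
          field_simp
          ring
        rw [e]
        exact div_mem (sub_mem (sub_mem (mul_mem (hnat 4) h1) (hnat 2)) (mul_mem (inv_mem hζE)
          (sub_mem (mul_mem (hnat 4) h0) (hnat 2)))) (sub_mem hζE (inv_mem hζE))
      have hle : IntermediateField.adjoin ℂ {z} ≤ E.restrictScalars ℂ := by
        rw [IntermediateField.adjoin_le_iff]
        rintro _ rfl
        exact hzE
      rw [htop] at hle
      rw [eq_top_iff]
      intro x _
      exact hle (IntermediateField.mem_top (x := x))
  have : FiniteDimensional (RatFunc ℂ) L := IsSplittingField.finiteDimensional L p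
  have hlift' : ∀ v : L, (v ^ m = z ^ m ∨ v ^ m * z ^ m = 1) →
      ∃ φ : L →ₐ[RatFunc ℂ] L, φ z = v := by
    intro v hv
    have hvt : Transcendental ℂ v := by
      intro hva
      apply hz
      apply hpowalg
      rcases hv with h | h
      · rw [← h]
        exact hva.pow m
      · rw [eq_inv_of_mul_eq_one_right h]
        exact (hva.pow m).inv
    obtain ⟨φ, hφ⟩ := hlift v hvt
    have hc : φ.comp (IsScalarTower.toAlgHom ℂ (RatFunc ℂ) L) =
        IsScalarTower.toAlgHom ℂ (RatFunc ℂ) L := by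
      apply ratfunc_ext
      simp only [AlgHom.comp_apply, IsScalarTower.coe_toAlgHom', hu, map_div₀, map_add, map_inv₀,
        map_pow, hφ, map_ofNat]
      rcases hv with h | h
      · rw [h]
      · rw [eq_inv_of_mul_eq_one_left h, inv_inv]
        ring
    exact ⟨{ φ with commutes' := fun r => DFunLike.congr_fun hc r }, hφ⟩
  have hext' : ∀ φ ψ : L →ₐ[RatFunc ℂ] L, φ z = ψ z → φ = ψ := by
    intro φ ψ h
    have := hext (φ.restrictScalars ℂ) (ψ.restrictScalars ℂ) h
    ext x
    exact DFunLike.congr_fun this x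
  have hcl : ∀ φ : L →ₐ[RatFunc ℂ] L, (φ z) ^ m = z ^ m ∨ (φ z) ^ m * z ^ m = 1 := by
    intro φ
    have hφz : φ z ≠ 0 := (map_ne_zero φ).2 hz0
    have h := φ.commutes RatFunc.X
    rw [hu] at h
    simp only [map_div₀, map_add, map_inv₀, map_pow, map_ofNat] at h
    exact add_inv_eq (pow_ne_zero _ hφz) (pow_ne_zero _ hz0) (by linear_combination 4 * h)
  let χ : AddChar (ZMod m) L := AddChar.zmodChar m hζ.pow_eq_one
  have hχ : ∀ i, χ i = ζ ^ i.val := fun i => AddChar.zmodChar_apply _ _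
  have hχinj : Function.Injective χ := by
    intro i j h
    rw [hχ, hχ] at h
    exact ZMod.val_injective m (hζ.pow_inj (ZMod.val_lt i) (ZMod.val_lt j) h)
  have hχm : ∀ i, (χ i) ^ m = 1 := fun i => by
    rw [hχ, ← pow_mul, mul_comm, pow_mul, hζ.pow_eq_one, one_pow]
  have hχ0 : ∀ i, χ i ≠ 0 := fun i => by
    rw [hχ]
    exact pow_ne_zero _ hζ0
  have hχsurj : ∀ x : L, x ^ m = 1 → ∃ i, χ i = x := by
    intro x hx
    obtain ⟨k, -, rfl⟩ := hζ.eq_pow_of_pow_eq_one hx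
    exact ⟨k, AddChar.zmodChar_apply' _ _⟩
  have hφχ : ∀ (φ : L →ₐ[RatFunc ℂ] L) i, φ (χ i) = χ i := by
    intro φ i
    rw [hχ, map_pow, ← hζ', φ.commutes]
  have hzm : z ^ m ≠ 0 := pow_ne_zero _ hz0
  choose R hR using fun i : ZMod m => hlift' (χ i * z) (Or.inl (by rw [mul_pow, hχm, one_mul]))
  choose S hS using fun i : ZMod m => hlift' (χ i * z⁻¹)
    (Or.inr (by rw [mul_pow, hχm, one_mul, inv_pow, inv_mul_cancel₀ hzm]))
  let Φ : DihedralGroup m → (L →ₐ[RatFunc ℂ] L) := fun g =>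
    match g with
    | .r i => R i
    | .sr i => S i
  let Ψ : DihedralGroup m →* (L →ₐ[RatFunc ℂ] L) :=
    { toFun := Φ
      map_one' := by
        apply hext'
        change R 0 z = z
        rw [hR, AddChar.map_zero_eq_one, one_mul]
      map_mul' := by
        rintro (i | i) (j | j) <;> apply hext' <;>
          simp only [Φ, DihedralGroup.r_mul_r, DihedralGroup.r_mul_sr, DihedralGroup.sr_mul_r,
            DihedralGroup.sr_mul_sr, AlgHom.mul_apply, hR, hS, map_mul, map_inv₀, hφχ,
            AddChar.map_add_eq_mul, AddChar.map_sub_eq_div]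
        · ring
        · have := hχ0 i
          field_simp
        · ring
        · have := hχ0 i
          field_simp }
  have hne : ∀ i j, χ i * z ≠ χ j * z⁻¹ := by
    intro i j h
    apply hno
    have := congrArg (· ^ m) h
    simp only [mul_pow, hχm, one_mul, inv_pow] at this
    nth_rewrite 1 [this]
    exact inv_mul_cancel₀ hzm
  have hΨ : Function.Bijective Ψ := by
    constructor
    · rintro (i | i) (j | j) h
      · have h' : R i z = R j z := DFunLike.congr_fun h z
        rw [hR, hR] at h'
        rw [hχinj (mul_right_cancel₀ hz0 h')]
      · have h' : R i z = S j z := DFunLike.congr_fun h z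
        rw [hR, hS] at h'
        exact absurd h' (hne _ _)
      · have h' : S i z = R j z := DFunLike.congr_fun h z
        rw [hR, hS] at h'
        exact absurd h'.symm (hne _ _)
      · have h' : S i z = S j z := DFunLike.congr_fun h z
        rw [hS, hS] at h'
        rw [hχinj (mul_right_cancel₀ (inv_ne_zero hz0) h')]
    · intro φ
      rcases hcl φ with h | h
      · obtain ⟨i, hi⟩ := hχsurj (φ z / z) (by rw [div_pow, h, div_self hzm])
        refine ⟨.r i, hext' _ _ ?_⟩
        change R i z = _
        rw [hR, hi, div_mul_cancel₀ _ hz0]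
      · obtain ⟨i, hi⟩ := hχsurj (φ z * z) (by rw [mul_pow, h])
        refine ⟨.sr i, hext' _ _ ?_⟩
        change S i z = _
        rw [hS, hi, mul_assoc, mul_inv_cancel₀ hz0, mul_one]
  let e1 : p.Gal ≃* (L ≃ₐ[RatFunc ℂ] L) := AlgEquiv.autCongr (IsSplittingField.algEquiv L p).symm
  exact ⟨(e1.trans (Algebra.IsAlgebraic.algEquivEquivAlgHom (RatFunc ℂ) L)).trans
    (MulEquiv.ofBijective Ψ hΨ).symm⟩

theorem stmt8 (m : ℕ) (hm : 3 ≤ m) (f : Polynomial ℂ)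
    (hf : f.comp (X ^ 2) = (Polynomial.Chebyshev.T ℂ (m : ℤ)) ^ 2) :
    Nonempty ((f.map (algebraMap ℂ (RatFunc ℂ)) - Polynomial.C RatFunc.X).Gal ≃*
      DihedralGroup m) := by
  obtain ⟨φ, hφ⟩ := ratfunc_lift _ (u_trans m hm)
  exact @main_aux_s8 (RatFunc ℂ) _ _ φ.toRingHom.toAlgebra
    (@IsScalarTower.of_algebraMap_eq' ℂ (RatFunc ℂ) (RatFunc ℂ) _ _ _ _ φ.toRingHom.toAlgebra _
      φ.comp_algebraMap.symm) RatFunc.X RatFunc.transcendental_X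
    (fun v hv => ratfunc_lift v hv) ratfunc_ext RatFunc.adjoin_X m hm hφ f hf
end
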